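/- Let α ∈ (0,1], let u be a classical solution of the localized fractional heat equation, and let C₀ ≥ 0 satisfy: sup_{[−1,0]×B_1^+} |u| ≤ C₀; ‖u‖_{C^α({−1}×closure(B_1^+))} ≤ C₀ (Hölder in (x,y) on the initial slice); ‖u‖_{C^α([−1,0]×∂B_1^0)} ≤ C₀ (Hölder in (t,x) on the lateral boundary y = 0, where ∂B_1^0 = {x : |x| = 1}); and ‖u(t,·,·)‖_{C^α(closure((∂B_1)^+))} ≤ C₀ for every t ∈ [−1,0]. Then there exist constants C > 0 and α̃ ∈ (0,1), depending only on s, n and α, such that for every (t,x,y) ∈ [−1,0] × closure(B_1^+) the following holds: if y > 0 and (x*,y*) is a point of closure((∂B_1)^+) at minimal Euclidean distance from (x,y), then with t* = t, |u(t,x,y) − u(t*,x*,y*)| ≤ C C₀ (|x−x*| + |y−y*|)^{α̃}; and if y = 0 and (t*,x*) is a point of ({−1} × closure(B_1^0)) ∪ ([−1,0] × ∂B_1^0) at minimal Euclidean distance from (t,x), then |u(t,x,0) − u(t*,x*,0)| ≤ C C₀ (|x−x*| + |t−t*|)^{α̃}. -/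

import Mathlib

open Set Filter Topology MeasureTheory
open scoped RealInnerProductSpace

noncomputable section

abbrev En (n : ℕ) := EuclideanSpace ℝ (Fin n)

/-- The open upper half ball `B_r^+`. -/
def halfBall (n : ℕ) (r : ℝ) : Set (En n × ℝ) :=
  {p | ‖p.1‖ ^ 2 + p.2 ^ 2 < r ^ 2 ∧ 0 < p.2}

/-- The closure of the upper half ball. -/
def closedHalfBall (n : ℕ) (r : ℝ) : Set (En n × ℝ) :=
  {p | ‖p.1‖ ^ 2 + p.2 ^ 2 ≤ r ^ 2 ∧ 0 ≤ p.2}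

/-- `B_r^+ ∪ B_r^0`. -/
def halfBallWithBase (n : ℕ) (r : ℝ) : Set (En n × ℝ) :=
  {p | ‖p.1‖ ^ 2 + p.2 ^ 2 < r ^ 2 ∧ 0 ≤ p.2}

/-- The flat ball `B_r^0` in `ℝⁿ`. -/
def flatBall (n : ℕ) (r : ℝ) : Set (En n) := {x | ‖x‖ < r}

/-- `(∂B_1)^+`. -/
def spherePlus (n : ℕ) : Set (En n × ℝ) := {p | ‖p.1‖ ^ 2 + p.2 ^ 2 = 1 ∧ 0 < p.2}

/-- closure of `(∂B_1)^+`. -/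
def closedSpherePlus (n : ℕ) : Set (En n × ℝ) := {p | ‖p.1‖ ^ 2 + p.2 ^ 2 = 1 ∧ 0 ≤ p.2}

/-- Second directional derivative of `u` at `p` in direction `v`. -/
def D2 {n : ℕ} (u : En n × ℝ → ℝ) (p v : En n × ℝ) : ℝ :=
  fderiv ℝ (fun q => fderiv ℝ u q v) p v

/-- The Laplacian in the `n+1` variables `(x, y)`. -/
def lap {n : ℕ} (u : En n × ℝ → ℝ) (p : En n × ℝ) : ℝ :=
  (∑ i : Fin n, D2 u p (EuclideanSpace.single i 1, 0)) + D2 u p (0, 1)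

/-- `u` is `a`-harmonic on `Ω`: it is `C²` there and `Δu + (a/y) ∂_y u = 0`. -/
def IsAHarmonicOn {n : ℕ} (a : ℝ) (u : En n × ℝ → ℝ) (Ω : Set (En n × ℝ)) : Prop :=
  ContDiffOn ℝ 2 u Ω ∧ ∀ p ∈ Ω, lap u p + (a / p.2) * fderiv ℝ u p (0, 1) = 0

/-- `lim_{y → 0⁺} y^a ∂_y w(x, y) = L`. -/
def NormalDerivLimit {n : ℕ} (a : ℝ) (w : En n × ℝ → ℝ) (x : En n) (L : ℝ) : Prop :=
  Tendsto (fun y : ℝ => y ^ a * fderiv ℝ w (x, y) (0, 1)) (𝓝[>] (0 : ℝ)) (𝓝 L)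

/-- The boundary-restriction `(t, x) ↦ u(t, x, 0)`. -/
def bdryFun {n : ℕ} (u : ℝ → En n × ℝ → ℝ) : ℝ × En n → ℝ := fun q => u q.1 (q.2, 0)

/-- A classical solution of the extended drift–diffusion equation on
`[-1,0] × closure (B_1^+)` with drift `b` and right-hand side `f`. -/
def IsExtDDSolution {n : ℕ} (a : ℝ) (b : ℝ → En n → En n) (f : ℝ → En n → ℝ)
    (u : ℝ → En n × ℝ → ℝ) : Prop :=
  ContinuousOn (fun q : ℝ × (En n × ℝ) => u q.1 q.2) (Icc (-1 : ℝ) 0 ×ˢ closedHalfBall n 1) ∧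
  (∀ t ∈ Icc (-1 : ℝ) 0, IsAHarmonicOn a (u t) (halfBall n 1)) ∧
  (∀ q ∈ Ioc (-1 : ℝ) 0 ×ˢ flatBall n 1,
      DifferentiableWithinAt ℝ (bdryFun u) (Ioc (-1 : ℝ) 0 ×ˢ flatBall n 1) q) ∧
  (∀ t x, (t, x) ∈ Ioc (-1 : ℝ) 0 ×ˢ flatBall n 1 →
      ∃ L : ℝ, NormalDerivLimit a (u t) x L ∧
        fderivWithin ℝ (bdryFun u) (Ioc (-1 : ℝ) 0 ×ˢ flatBall n 1) (t, x) (1, 0) +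
          fderivWithin ℝ (bdryFun u) (Ioc (-1 : ℝ) 0 ×ˢ flatBall n 1) (t, x) (0, b t x) -
          L = f t x)

/-- A classical solution of the localized fractional heat equation on
`[-1,0] × closure (B_1^+)`. -/
def IsFracHeatSolution {n : ℕ} (a : ℝ) (u : ℝ → En n × ℝ → ℝ) : Prop :=
  ContinuousOn (fun q : ℝ × (En n × ℝ) => u q.1 q.2) (Icc (-1 : ℝ) 0 ×ˢ closedHalfBall n 1) ∧
  (∀ t ∈ Icc (-1 : ℝ) 0, IsAHarmonicOn a (u t) (halfBall n 1)) ∧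
  (∀ t ∈ Ioc (-1 : ℝ) 0, ∀ x ∈ flatBall n 1,
      DifferentiableWithinAt ℝ (fun τ => u τ (x, 0)) (Ioc (-1 : ℝ) 0) t ∧
      NormalDerivLimit a (u t) x (derivWithin (fun τ => u τ (x, 0)) (Ioc (-1 : ℝ) 0) t))

/-!
The solution is compared with explicit barriers. Hölder data at a boundary point is dominated by a
relaxed tangent line to a concave power of the height of a point below the tangent hyperplane of the
sphere; that height is affine, so it costs little in the equation. Near the edge `|x| = 1`, `y = 0`
the data varies in time as well, and this variation is absorbed by the solution
`t + y ^ (2 * s) / (2 * s)`. At distance `ρ` or more from the edge, on the sphere or at the initial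
time, the part of the boundary where no data is prescribed or used is handled by the trivial bound
`2 * C₀`, at the price of a factor `ρ⁻²`. Taking `ρ` to be the fourth root of the distance to the
boundary point balances the two regimes.
-/

section SecondOrder

variable {n : ℕ} {u v : En n × ℝ → ℝ} {p : En n × ℝ}

lemma deriv_deriv_nonpos_of_isLocalMax {f : ℝ → ℝ} {r : ℝ} (hmax : IsLocalMax f r)
    (hf : ContinuousAt f r) : deriv (deriv f) r ≤ 0 := by
  by_contra! hpos
  have hmin : IsLocalMin f r := isLocalMin_of_deriv_deriv_pos hpos hmax.deriv_eq_zero hf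
  have hconst : f =ᶠ[𝓝 r] fun _ => f r := by
    filter_upwards [hmax, hmin] with z hz₁ hz₂ using le_antisymm hz₁ hz₂
  rw [hconst.deriv.deriv_eq] at hpos
  simp at hpos

lemma differentiableAt_fderiv_apply (hu : ContDiffAt ℝ 2 u p) (w : En n × ℝ) :
    DifferentiableAt ℝ (fun q => fderiv ℝ u q w) p :=
  ((hu.fderiv_right (m := 1) (by norm_num)).differentiableAt one_ne_zero).clm_apply
    (differentiableAt_const w)

lemma eventually_differentiableAt (hu : ContDiffAt ℝ 2 u p) :
    ∀ᶠ q in 𝓝 p, DifferentiableAt ℝ u q :=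
  (hu.eventually (by simp)).mono fun _ hq => hq.differentiableAt two_ne_zero

lemma hasDerivAt_add_smul {E : Type*} [NormedAddCommGroup E] [NormedSpace ℝ E] (x w : E) (r : ℝ) :
    HasDerivAt (fun r : ℝ => x + r • w) w r := by
  simpa using ((hasDerivAt_id r).smul_const w).const_add x

lemma D2_eq_deriv_deriv (hu : ContDiffAt ℝ 2 u p) (w : En n × ℝ) :
    D2 u p w = deriv (deriv fun r : ℝ => u (p + r • w)) 0 := by
  have hp : p + (0 : ℝ) • w = p := by simp
  have hline : Tendsto (fun r : ℝ => p + r • w) (𝓝 0) (𝓝 p) := by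
    simpa [hp] using (hasDerivAt_add_smul p w 0).continuousAt.tendsto
  have hfirst : (deriv fun r : ℝ => u (p + r • w)) =ᶠ[𝓝 0] fun r => fderiv ℝ u (p + r • w) w := by
    filter_upwards [hline.eventually (eventually_differentiableAt hu)] with r hr
    exact (hr.hasFDerivAt.comp_hasDerivAt r (hasDerivAt_add_smul p w r)).deriv
  have hsecond : HasFDerivAt (fun q => fderiv ℝ u q w) (fderiv ℝ (fun q => fderiv ℝ u q w) p)
      (p + (0 : ℝ) • w) := by
    rw [hp]
    exact (differentiableAt_fderiv_apply hu w).hasFDerivAt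
  rw [hfirst.deriv_eq]
  exact (hsecond.comp_hasDerivAt (0 : ℝ) (hasDerivAt_add_smul p w 0)).deriv.symm

lemma D2_nonpos_of_isLocalMax (hu : ContDiffAt ℝ 2 u p) (hmax : IsLocalMax u p) (w : En n × ℝ) :
    D2 u p w ≤ 0 := by
  have hline : ContinuousAt (fun r : ℝ => p + r • w) 0 := (hasDerivAt_add_smul p w 0).continuousAt
  have hp : p + (0 : ℝ) • w = p := by simp
  rw [← hp] at hmax
  rw [D2_eq_deriv_deriv hu]
  exact deriv_deriv_nonpos_of_isLocalMax (hline.tendsto.eventually hmax)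
    (hu.continuousAt.comp_of_eq hline hp)

lemma D2_add (hu : ContDiffAt ℝ 2 u p) (hv : ContDiffAt ℝ 2 v p) (w : En n × ℝ) :
    D2 (u + v) p w = D2 u p w + D2 v p w := by
  have hfirst : (fun q => fderiv ℝ (u + v) q w) =ᶠ[𝓝 p]
      (fun q => fderiv ℝ u q w) + fun q => fderiv ℝ v q w := by
    filter_upwards [eventually_differentiableAt hu, eventually_differentiableAt hv] with q hq₁ hq₂
    simp [fderiv_add hq₁ hq₂]
  rw [D2, hfirst.fderiv_eq, fderiv_add (differentiableAt_fderiv_apply hu w)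
    (differentiableAt_fderiv_apply hv w)]
  rfl

lemma D2_smul (c : ℝ) (w : En n × ℝ) : D2 (c • u) p w = c * D2 u p w := by
  have hfirst : (fun q => fderiv ℝ (c • u) q w) = c • fun q => fderiv ℝ u q w := by
    funext q
    simp [fderiv_const_smul_field]
  rw [D2, hfirst, fderiv_const_smul_field]
  rfl

lemma hasDerivAt_quadratic (c c₁ c₂ r : ℝ) :
    HasDerivAt (fun r : ℝ => c + c₁ * r + c₂ * r ^ 2) (c₁ + 2 * c₂ * r) r := by
  refine ((((hasDerivAt_id r).const_mul c₁).const_add c).add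
    ((hasDerivAt_pow 2 r).const_mul c₂)).congr_deriv ?_
  norm_num
  ring

lemma D2_eq_of_quadratic_slice (hu : ContDiffAt ℝ 2 u p) {w : En n × ℝ} {c c₁ c₂ : ℝ}
    (hslice : ∀ r : ℝ, u (p + r • w) = c + c₁ * r + c₂ * r ^ 2) : D2 u p w = 2 * c₂ := by
  rw [D2_eq_deriv_deriv hu]
  have hfirst : (deriv fun r : ℝ => u (p + r • w)) = fun r => c₁ + 2 * c₂ * r := by
    funext r
    rw [funext hslice, (hasDerivAt_quadratic c c₁ c₂ r).deriv]
  rw [hfirst]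
  simp

/-- The operator `Δ + (a / y) ∂_y`, whose kernel consists of the `a`-harmonic functions. -/
def aLaplacian (a : ℝ) (u : En n × ℝ → ℝ) (p : En n × ℝ) : ℝ :=
  lap u p + a / p.2 * fderiv ℝ u p (0, 1)

lemma aLaplacian_add (a : ℝ) (hu : ContDiffAt ℝ 2 u p) (hv : ContDiffAt ℝ 2 v p) :
    aLaplacian a (u + v) p = aLaplacian a u p + aLaplacian a v p := by
  simp only [aLaplacian, lap, D2_add hu hv, Finset.sum_add_distrib, add_apply,
    fderiv_add (hu.differentiableAt two_ne_zero) (hv.differentiableAt two_ne_zero)]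
  ring

lemma aLaplacian_smul (a c : ℝ) : aLaplacian a (c • u) p = c * aLaplacian a u p := by
  simp only [aLaplacian, lap, D2_smul, ← Finset.mul_sum, fderiv_const_smul_field, Pi.smul_apply,
    smul_apply, smul_eq_mul]
  ring

lemma aLaplacian_nonpos_of_isLocalMax (a : ℝ) (hu : ContDiffAt ℝ 2 u p) (hmax : IsLocalMax u p) :
    aLaplacian a u p ≤ 0 := by
  have hlap : lap u p ≤ 0 :=
    add_nonpos (Finset.sum_nonpos fun i _ => D2_nonpos_of_isLocalMax hu hmax _)
      (D2_nonpos_of_isLocalMax hu hmax _)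
  simpa [aLaplacian, hmax.fderiv_eq_zero] using hlap

/-- The quadratic polynomials `c + b · x + e y + m |x|² + l y²` on the half space, the building
blocks of all barriers. -/
def quadraticPoly (c : ℝ) (b : En n) (e m l : ℝ) (p : En n × ℝ) : ℝ :=
  c + ⟪b, p.1⟫ + e * p.2 + m * ‖p.1‖ ^ 2 + l * p.2 ^ 2

lemma contDiff_quadraticPoly (c : ℝ) (b : En n) (e m l : ℝ) :
    ContDiff ℝ 2 (quadraticPoly c b e m l) := by
  have hinner : ContDiff ℝ 2 fun p : En n × ℝ => ⟪b, p.1⟫ := contDiff_const.inner ℝ contDiff_fst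
  have hnorm : ContDiff ℝ 2 fun p : En n × ℝ => ‖p.1‖ ^ 2 := contDiff_fst.norm_sq ℝ
  unfold quadraticPoly
  fun_prop

lemma fderiv_quadraticPoly_vertical (c : ℝ) (b : En n) (e m l : ℝ) (p : En n × ℝ) :
    fderiv ℝ (quadraticPoly c b e m l) p (0, 1) = e + 2 * l * p.2 := by
  have hslice : (fun r : ℝ => quadraticPoly c b e m l (p + r • ((0, 1) : En n × ℝ))) =
      fun r => quadraticPoly c b e m l p + (e + 2 * l * p.2) * r + l * r ^ 2 := by
    funext r
    simp only [quadraticPoly, Prod.smul_mk, smul_zero, smul_eq_mul, mul_one, Prod.fst_add,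
      add_zero, Prod.snd_add]
    ring
  have hdiff : DifferentiableAt ℝ (quadraticPoly c b e m l) p :=
    (contDiff_quadraticPoly c b e m l).differentiable two_ne_zero p
  rw [← hdiff.lineDeriv_eq_fderiv, lineDeriv, hslice, (hasDerivAt_quadratic _ _ _ _).deriv]
  ring

lemma aLaplacian_quadraticPoly (a c : ℝ) (b : En n) (e m l : ℝ) (hp : p.2 ≠ 0) :
    aLaplacian a (quadraticPoly c b e m l) p = 2 * n * m + 2 * (1 + a) * l + a * e / p.2 := by
  have hC := (contDiff_quadraticPoly c b e m l).contDiffAt (x := p)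
  have hx (i : Fin n) :
      D2 (quadraticPoly c b e m l) p (EuclideanSpace.single i 1, 0) = 2 * m := by
    refine D2_eq_of_quadratic_slice hC (c := quadraticPoly c b e m l p)
      (c₁ := b i + 2 * m * p.1 i) fun r => ?_
    simp only [quadraticPoly, Prod.smul_mk, smul_eq_mul, mul_zero, Prod.fst_add, inner_add_right,
      inner_smul_right, EuclideanSpace.inner_single_right, Real.ringHom_apply, one_mul,
      Prod.snd_add, add_zero, norm_add_sq_real, norm_smul, Real.norm_eq_abs, PiLp.norm_single,
      norm_one, mul_one, sq_abs]
    ring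
  have hy : D2 (quadraticPoly c b e m l) p (0, 1) = 2 * l := by
    refine D2_eq_of_quadratic_slice hC (c := quadraticPoly c b e m l p)
      (c₁ := e + 2 * l * p.2) fun r => ?_
    simp only [quadraticPoly, Prod.smul_mk, smul_zero, smul_eq_mul, mul_one, Prod.fst_add,
      add_zero, Prod.snd_add]
    ring
  simp only [aLaplacian, lap, hx, hy, fderiv_quadraticPoly_vertical, Finset.sum_const,
    Finset.card_univ, Fintype.card_fin, nsmul_eq_mul]
  field_simp
  ring

end SecondOrder

section HalfBall

variable {n : ℕ} {p q : En n × ℝ} {x : En n}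

lemma isOpen_halfBall (n : ℕ) (r : ℝ) : IsOpen (halfBall n r) := by
  have hball : IsOpen {p : En n × ℝ | ‖p.1‖ ^ 2 + p.2 ^ 2 < r ^ 2} :=
    isOpen_lt (by fun_prop) (by fun_prop)
  exact hball.inter (isOpen_lt continuous_const continuous_snd)

lemma isClosed_closedHalfBall (n : ℕ) (r : ℝ) : IsClosed (closedHalfBall n r) := by
  have hball : IsClosed {p : En n × ℝ | ‖p.1‖ ^ 2 + p.2 ^ 2 ≤ r ^ 2} :=
    isClosed_le (by fun_prop) (by fun_prop)
  exact hball.inter (isClosed_le continuous_const continuous_snd)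

lemma halfBall_subset_closedHalfBall (n : ℕ) (r : ℝ) : halfBall n r ⊆ closedHalfBall n r :=
  fun _ hp => ⟨hp.1.le, hp.2.le⟩

lemma closedSpherePlus_subset_closedHalfBall (n : ℕ) : closedSpherePlus n ⊆ closedHalfBall n 1 :=
  fun _ hp => ⟨by simpa using hp.1.le, hp.2⟩

lemma norm_fst_le_one (hp : p ∈ closedHalfBall n 1) : ‖p.1‖ ≤ 1 := by
  nlinarith [hp.1, norm_nonneg p.1]

lemma snd_le_one (hp : p ∈ closedHalfBall n 1) : p.2 ≤ 1 := by
  nlinarith [hp.1]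

lemma base_mem_closedHalfBall (hx : ‖x‖ ≤ 1) : ((x, 0) : En n × ℝ) ∈ closedHalfBall n 1 := by
  simpa [closedHalfBall] using hx

lemma base_mem_closedSpherePlus (hx : ‖x‖ = 1) : ((x, 0) : En n × ℝ) ∈ closedSpherePlus n := by
  simp [closedSpherePlus, hx]

lemma isCompact_closedHalfBall (n : ℕ) : IsCompact (closedHalfBall n 1) := by
  refine Metric.isCompact_of_isClosed_isBounded (isClosed_closedHalfBall n 1)
    ((Metric.isBounded_closedBall (x := (0 : En n × ℝ)) (r := 1)).subset fun p hp => ?_)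
  rw [mem_closedBall_zero_iff, Prod.norm_def, Real.norm_of_nonneg hp.2]
  exact max_le (norm_fst_le_one hp) (snd_le_one hp)

lemma mem_halfBall_or_base_or_sphere (hp : p ∈ closedHalfBall n 1) :
    p ∈ halfBall n 1 ∨ p.2 = 0 ∧ ‖p.1‖ < 1 ∨ p ∈ closedSpherePlus n := by
  rcases hp.1.eq_or_lt with hsphere | hball
  · exact .inr (.inr ⟨by simpa using hsphere, hp.2⟩)
  rcases hp.2.eq_or_lt with hbase | hpos
  · exact .inr (.inl ⟨hbase.symm, by rw [← hbase] at hball; nlinarith [norm_nonneg p.1]⟩)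
  · exact .inl ⟨hball, hpos⟩

lemma closure_halfBall (n : ℕ) : closure (halfBall n 1) = closedHalfBall n 1 := by
  refine (closure_minimal (halfBall_subset_closedHalfBall n 1)
    (isClosed_closedHalfBall n 1)).antisymm fun p hp => ?_
  let f : ℝ → En n × ℝ := fun r => ((1 - r) • p.1, (1 - r) * p.2 + r / 2)
  have hf : Tendsto f (𝓝[>] 0) (𝓝 p) := by
    have : Continuous f := by fun_prop
    simpa [f] using (this.tendsto 0).mono_left nhdsWithin_le_nhds
  refine mem_closure_of_tendsto hf ?_
  filter_upwards [Ioo_mem_nhdsGT (zero_lt_one' ℝ)] with r ⟨hr₀, hr₁⟩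
  have hpos : 0 ≤ (1 - r) * p.2 := mul_nonneg (by linarith) hp.2
  refine ⟨?_, by simp only [f]; linarith⟩
  have hscaled : (1 - r) ^ 2 * (‖p.1‖ ^ 2 + p.2 ^ 2) ≤ (1 - r) ^ 2 * 1 ^ 2 :=
    mul_le_mul_of_nonneg_left hp.1 (sq_nonneg _)
  have hcross : r * ((1 - r) * p.2) ≤ r * ((1 - r) * 1) :=
    mul_le_mul_of_nonneg_left
      (mul_le_mul_of_nonneg_left (snd_le_one hp) (by linarith)) hr₀.le
  simp only [f, norm_smul, Real.norm_eq_abs, mul_pow, sq_abs]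
  nlinarith

lemma eventually_mem_halfBall (hx : ‖x‖ < 1) : ∀ᶠ y in 𝓝[>] (0 : ℝ), (x, y) ∈ halfBall n 1 := by
  have hopen : IsOpen {y : ℝ | ‖x‖ ^ 2 + y ^ 2 < 1 ^ 2} := isOpen_lt (by fun_prop) (by fun_prop)
  have hzero : (0 : ℝ) ∈ {y : ℝ | ‖x‖ ^ 2 + y ^ 2 < 1 ^ 2} := by
    simpa using pow_lt_one₀ (norm_nonneg x) hx two_ne_zero
  filter_upwards [nhdsWithin_le_nhds (hopen.mem_nhds hzero), self_mem_nhdsWithin] with y hy₁ hy₂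
    using ⟨hy₁, hy₂⟩

end HalfBall

section MaximumPrinciples

variable {n : ℕ} {a : ℝ} {u v : En n × ℝ → ℝ} {x : En n}

theorem le_of_aLaplacian_nonneg (ha : -1 < a) {K Ω : Set (En n × ℝ)} (hK : IsCompact K)
    (hΩ : IsOpen Ω) (hΩK : Ω ⊆ K) (hpos : ∀ p ∈ Ω, 0 < p.2) (hcont : ContinuousOn u K)
    (hC2 : ContDiffOn ℝ 2 u Ω) (hL : ∀ p ∈ Ω, 0 ≤ aLaplacian a u p)
    {m : ℝ} (hbdry : ∀ p ∈ K \ Ω, u p ≤ m) : ∀ p ∈ K, u p ≤ m := by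
  obtain ⟨M, hM⟩ := hK.exists_bound_of_continuousOn
    (f := fun p : En n × ℝ => p.2 ^ 2) (by fun_prop)
  have hperturbed (ε : ℝ) (hε : 0 < ε) : ∀ p ∈ K, u p ≤ m + ε * M := by
    let w := u + quadraticPoly 0 0 0 0 ε
    have hw (p : En n × ℝ) : w p = u p + ε * p.2 ^ 2 := by simp [w, quadraticPoly]
    intro p hp
    obtain ⟨q, hq, hmax⟩ := hK.exists_isMaxOn ⟨p, hp⟩
      (hcont.add (contDiff_quadraticPoly 0 0 0 0 ε).continuous.continuousOn)
    have hqΩ : q ∉ Ω := fun hqΩ => by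
      have hu : ContDiffAt ℝ 2 u q := hC2.contDiffAt (hΩ.mem_nhds hqΩ)
      have hquad := (contDiff_quadraticPoly 0 (0 : En n) 0 0 ε).contDiffAt (x := q)
      have hnonpos : aLaplacian a w q ≤ 0 := aLaplacian_nonpos_of_isLocalMax a (hu.add hquad)
        (hmax.isLocalMax (mem_of_superset (hΩ.mem_nhds hqΩ) hΩK))
      rw [aLaplacian_add a hu hquad, aLaplacian_quadraticPoly _ _ _ _ _ _ (hpos q hqΩ).ne',
        mul_zero, mul_zero, zero_div] at hnonpos
      nlinarith [hL q hqΩ, mul_pos hε (show 0 < 1 + a by linarith)]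
    have hle : w p ≤ w q := hmax hp
    have hMq := (le_abs_self _).trans (hM q hq)
    rw [hw, hw] at hle
    nlinarith [hbdry q ⟨hq, hqΩ⟩, mul_nonneg hε.le (sq_nonneg p.2)]
  intro p hp
  have hlim : Tendsto (fun ε : ℝ => m + ε * M) (𝓝[>] 0) (𝓝 m) := by
    have hcont : Continuous fun ε : ℝ => m + ε * M := by fun_prop
    simpa using (hcont.tendsto 0).mono_left nhdsWithin_le_nhds
  exact ge_of_tendsto hlim (eventually_mem_nhdsWithin.mono fun ε hε => hperturbed ε hε p hp)

theorem exists_gt_base_of_normalDerivLimit_pos {L : ℝ} (hx : ‖x‖ < 1)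
    (hcont : ContinuousOn u (closedHalfBall n 1)) (hC2 : ContDiffOn ℝ 2 u (halfBall n 1))
    (hlim : NormalDerivLimit a u x L) (hL : 0 < L) :
    ∃ y, (x, y) ∈ closedHalfBall n 1 ∧ u (x, 0) < u (x, y) := by
  obtain ⟨δ, hδ, hδs⟩ := mem_nhdsGT_iff_exists_Ioc_subset.1
    ((hlim.eventually (lt_mem_nhds hL)).and (eventually_mem_halfBall hx))
  have hmem : ∀ y ∈ Icc 0 δ, (x, y) ∈ closedHalfBall n 1 := by
    intro y hy
    rcases hy.1.eq_or_lt with rfl | hy₀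
    · exact base_mem_closedHalfBall hx.le
    · exact halfBall_subset_closedHalfBall n 1 (hδs ⟨hy₀, hy.2⟩).2
  have hmono : StrictMonoOn (fun y => u (x, y)) (Icc 0 δ) := by
    refine strictMonoOn_of_deriv_pos (convex_Icc 0 δ) (hcont.comp (by fun_prop) hmem) ?_
    rw [interior_Icc]
    intro y hy
    obtain ⟨hflux, hball⟩ := hδs ⟨hy.1, hy.2.le⟩
    have hdiff : DifferentiableAt ℝ u (x, y) :=
      (hC2.contDiffAt ((isOpen_halfBall n 1).mem_nhds hball)).differentiableAt two_ne_zero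
    have hderiv := hdiff.hasFDerivAt.comp_hasDerivAt y
      ((hasDerivAt_const y x).prodMk (hasDerivAt_id y))
    exact hderiv.deriv ▸ pos_of_mul_pos_right hflux (Real.rpow_nonneg hy.1.le _)
  exact ⟨δ, hmem δ (right_mem_Icc.2 hδ.le),
    hmono (left_mem_Icc.2 hδ.le) (right_mem_Icc.2 hδ.le) hδ⟩

lemma le_derivWithin_of_left_max {f : ℝ → ℝ} {c ε t b : ℝ} (hct : c < t) (htb : t ≤ b)
    (hf : DifferentiableWithinAt ℝ f (Ioc c b) t)
    (hmax : ∀ τ ∈ Ioo c t, f τ - ε * τ ≤ f t - ε * t) : ε ≤ derivWithin f (Ioc c b) t := by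
  have hleft : HasDerivWithinAt f (derivWithin f (Ioc c b) t) (Ioo c t) t :=
    hf.hasDerivWithinAt.mono fun τ hτ => ⟨hτ.1, hτ.2.le.trans htb⟩
  rw [hasDerivWithinAt_iff_tendsto_slope' (by simp), nhdsWithin_Ioo_eq_nhdsLT hct] at hleft
  refine ge_of_tendsto hleft ?_
  filter_upwards [Ioo_mem_nhdsLT hct] with τ hτ
  rw [slope_def_field, le_div_iff_of_neg (by linarith [hτ.2])]
  linarith [hmax τ hτ]

end MaximumPrinciples

section HeatSolutions

variable {n : ℕ} {a : ℝ}

lemma IsAHarmonicOn.add {u v : En n × ℝ → ℝ} {Ω : Set (En n × ℝ)} (hΩ : IsOpen Ω)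
    (hu : IsAHarmonicOn a u Ω) (hv : IsAHarmonicOn a v Ω) : IsAHarmonicOn a (u + v) Ω := by
  refine ⟨hu.1.add hv.1, fun p hp => ?_⟩
  have hmem := hΩ.mem_nhds hp
  have hsum := aLaplacian_add a (hu.1.contDiffAt hmem) (hv.1.contDiffAt hmem)
  have hu₀ : aLaplacian a u p = 0 := hu.2 p hp
  have hv₀ : aLaplacian a v p = 0 := hv.2 p hp
  rwa [hu₀, hv₀, add_zero] at hsum

lemma IsAHarmonicOn.const_smul {u : En n × ℝ → ℝ} {Ω : Set (En n × ℝ)}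
    (hu : IsAHarmonicOn a u Ω) (c : ℝ) : IsAHarmonicOn a (c • u) Ω := by
  refine ⟨hu.1.const_smul c, fun p hp => ?_⟩
  have hu₀ : aLaplacian a u p = 0 := hu.2 p hp
  have hsmul := aLaplacian_smul (u := u) (p := p) a c
  rwa [hu₀, mul_zero] at hsmul

lemma NormalDerivLimit.add {u v : En n × ℝ → ℝ} {x : En n} {L L' : ℝ}
    (hu : NormalDerivLimit a u x L) (hv : NormalDerivLimit a v x L')
    (hdu : ∀ᶠ y in 𝓝[>] (0 : ℝ), DifferentiableAt ℝ u (x, y))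
    (hdv : ∀ᶠ y in 𝓝[>] (0 : ℝ), DifferentiableAt ℝ v (x, y)) :
    NormalDerivLimit a (u + v) x (L + L') := by
  refine (Tendsto.add hu hv).congr' ?_
  filter_upwards [hdu, hdv] with y hy₁ hy₂
  rw [fderiv_add hy₁ hy₂, add_apply, mul_add]

lemma NormalDerivLimit.const_smul {u : En n × ℝ → ℝ} {x : En n} {L : ℝ}
    (hu : NormalDerivLimit a u x L) (c : ℝ) : NormalDerivLimit a (c • u) x (c * L) := by
  refine (Tendsto.const_mul c hu).congr fun y => ?_
  rw [fderiv_const_smul_field, Pi.smul_apply, smul_apply, smul_eq_mul]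
  ring

namespace IsFracHeatSolution

variable {u v : ℝ → En n × ℝ → ℝ}

lemma continuousOn_slice (hu : IsFracHeatSolution a u) {t : ℝ} (ht : t ∈ Icc (-1 : ℝ) 0) :
    ContinuousOn (u t) (closedHalfBall n 1) :=
  hu.1.comp (f := fun p => (t, p)) (by fun_prop) fun _ hp => ⟨ht, hp⟩

lemma continuousOn_base (hu : IsFracHeatSolution a u) :
    ContinuousOn (bdryFun u) (Icc (-1 : ℝ) 0 ×ˢ Metric.closedBall 0 1) :=
  hu.1.comp (f := fun q : ℝ × En n => (q.1, (q.2, (0 : ℝ)))) (by fun_prop)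
    fun q hq => ⟨hq.1, base_mem_closedHalfBall (by simpa using hq.2)⟩

lemma eventually_differentiableAt (hu : IsFracHeatSolution a u) {t : ℝ}
    (ht : t ∈ Ioc (-1 : ℝ) 0) {x : En n} (hx : x ∈ flatBall n 1) :
    ∀ᶠ y in 𝓝[>] (0 : ℝ), DifferentiableAt ℝ (u t) (x, y) :=
  (eventually_mem_halfBall hx).mono fun _ hy =>
    ((hu.2.1 t (Ioc_subset_Icc_self ht)).1.contDiffAt
      ((isOpen_halfBall n 1).mem_nhds hy)).differentiableAt two_ne_zero

lemma add (hu : IsFracHeatSolution a u) (hv : IsFracHeatSolution a v) :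
    IsFracHeatSolution a (u + v) := by
  refine ⟨hu.1.add hv.1, fun t ht => (hu.2.1 t ht).add (isOpen_halfBall n 1) (hv.2.1 t ht),
    fun t ht x hx => ?_⟩
  obtain ⟨hdu, hLu⟩ := hu.2.2 t ht x hx
  obtain ⟨hdv, hLv⟩ := hv.2.2 t ht x hx
  refine ⟨hdu.add hdv, ?_⟩
  have hderiv := derivWithin_add hdu hdv
  exact hderiv ▸ hLu.add hLv (hu.eventually_differentiableAt ht hx)
    (hv.eventually_differentiableAt ht hx)

lemma const_smul (hu : IsFracHeatSolution a u) (c : ℝ) : IsFracHeatSolution a (c • u) := by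
  refine ⟨hu.1.const_smul c, fun t ht => (hu.2.1 t ht).const_smul c, fun t ht x hx => ?_⟩
  obtain ⟨hdu, hLu⟩ := hu.2.2 t ht x hx
  refine ⟨hdu.const_smul c, ?_⟩
  have hderiv := derivWithin_const_smul c hdu
  exact hderiv ▸ hLu.const_smul c

lemma neg (hu : IsFracHeatSolution a u) : IsFracHeatSolution a (-u) := by
  simpa using hu.const_smul (-1)

lemma sub (hu : IsFracHeatSolution a u) (hv : IsFracHeatSolution a v) :
    IsFracHeatSolution a (u - v) := by
  simpa [sub_eq_add_neg] using hu.add hv.neg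

lemma le_of_le_on_boundary (ha : -1 < a) (hu : IsFracHeatSolution a u) {t : ℝ}
    (ht : t ∈ Icc (-1 : ℝ) 0) {m : ℝ} (hsphere : ∀ p ∈ closedSpherePlus n, u t p ≤ m)
    (hbase : ∀ x : En n, ‖x‖ < 1 → u t (x, 0) ≤ m) : ∀ p ∈ closedHalfBall n 1, u t p ≤ m := by
  refine le_of_aLaplacian_nonneg ha (isCompact_closedHalfBall n) (isOpen_halfBall n 1)
    (halfBall_subset_closedHalfBall n 1) (fun p hp => hp.2) (hu.continuousOn_slice ht)
    (hu.2.1 t ht).1 (fun p hp => ((hu.2.1 t ht).2 p hp).ge) ?_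
  rintro ⟨x, y⟩ ⟨hp, hpΩ⟩
  rcases mem_halfBall_or_base_or_sphere hp with hint | ⟨rfl, hx⟩ | hS
  exacts [absurd hint hpΩ, hbase x hx, hsphere _ hS]

lemma derivWithin_base_nonpos (hu : IsFracHeatSolution a u) {t : ℝ} (ht : t ∈ Ioc (-1 : ℝ) 0)
    {x : En n} (hx : ‖x‖ < 1) (hmax : ∀ p ∈ closedHalfBall n 1, u t p ≤ u t (x, 0)) :
    derivWithin (fun τ => u τ (x, 0)) (Ioc (-1 : ℝ) 0) t ≤ 0 := by
  by_contra! hpos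
  have ht' := Ioc_subset_Icc_self ht
  obtain ⟨y, hy, hlt⟩ := exists_gt_base_of_normalDerivLimit_pos hx (hu.continuousOn_slice ht')
    (hu.2.1 t ht').1 (hu.2.2 t ht x hx).2 hpos
  exact hlt.not_ge (hmax _ hy)

lemma base_le_mul_time (ha : -1 < a) (hu : IsFracHeatSolution a u) {T : ℝ} (hT : T ≤ 0)
    (hsphere : ∀ t ∈ Icc (-1 : ℝ) T, ∀ p ∈ closedSpherePlus n, u t p ≤ 0)
    (hinit : ∀ x : En n, ‖x‖ < 1 → u (-1) (x, 0) ≤ 0) {ε : ℝ} (hε : 0 < ε) :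
    ∀ t ∈ Icc (-1 : ℝ) T, ∀ x : En n, ‖x‖ ≤ 1 → u t (x, 0) ≤ ε * (t + 1) := by
  intro t₀ ht₀ x₀ hx₀
  have hsub : Icc (-1 : ℝ) T ×ˢ Metric.closedBall (0 : En n) 1 ⊆
      Icc (-1 : ℝ) 0 ×ˢ Metric.closedBall 0 1 := prod_mono (Icc_subset_Icc_right hT) subset_rfl
  have hcont : ContinuousOn (fun q : ℝ × En n => bdryFun u q - ε * (q.1 + 1))
      (Icc (-1 : ℝ) T ×ˢ Metric.closedBall 0 1) :=
    (hu.continuousOn_base.mono hsub).sub (by fun_prop)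
  obtain ⟨⟨t, x⟩, ⟨ht, hx⟩, hmax⟩ := (isCompact_Icc.prod (isCompact_closedBall _ _)).exists_isMaxOn
    ⟨(t₀, x₀), ht₀, by simpa using hx₀⟩ hcont
  replace hmax : ∀ τ ∈ Icc (-1 : ℝ) T, ∀ z : En n, ‖z‖ ≤ 1 →
      u τ (z, 0) - ε * (τ + 1) ≤ u t (x, 0) - ε * (t + 1) :=
    fun τ hτ z hz => hmax (a := (τ, z)) ⟨hτ, by simpa using hz⟩
  suffices u t (x, 0) ≤ ε * (t + 1) by linarith [hmax t₀ ht₀ x₀ hx₀]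
  have hnonneg : 0 ≤ ε * (t + 1) := mul_nonneg hε.le (by linarith [ht.1])
  by_contra! hpos
  have hx₁ : ‖x‖ < 1 := lt_of_le_of_ne (by simpa using hx) fun hx₁ => by
    linarith [hsphere t ht (x, 0) (base_mem_closedSpherePlus hx₁)]
  have ht₁ : t ∈ Ioc (-1 : ℝ) 0 := by
    refine ⟨lt_of_le_of_ne ht.1 fun h => ?_, ht.2.trans hT⟩
    subst h
    linarith [hinit x hx₁]
  have hderiv : ε ≤ derivWithin (fun τ => u τ (x, 0)) (Ioc (-1 : ℝ) 0) t := by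
    refine le_derivWithin_of_left_max ht₁.1 ht₁.2 (hu.2.2 t ht₁ x hx₁).1 fun τ hτ => ?_
    linarith [hmax τ ⟨hτ.1.le, hτ.2.le.trans ht.2⟩ x hx₁.le]
  refine hε.not_ge (hderiv.trans (hu.derivWithin_base_nonpos ht₁ hx₁ ?_))
  refine hu.le_of_le_on_boundary ha (Ioc_subset_Icc_self ht₁) (fun p hp => ?_) fun z hz => ?_
  · linarith [hsphere t ht p hp]
  · linarith [hmax t ht z hz.le]

theorem comparison (ha : -1 < a) (hu : IsFracHeatSolution a u) (hv : IsFracHeatSolution a v)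
    {T : ℝ} (hT : T ≤ 0)
    (hsphere : ∀ t ∈ Icc (-1 : ℝ) T, ∀ p ∈ closedSpherePlus n, u t p ≤ v t p)
    (hinit : ∀ x : En n, ‖x‖ < 1 → u (-1) (x, 0) ≤ v (-1) (x, 0)) :
    ∀ t ∈ Icc (-1 : ℝ) T, ∀ p ∈ closedHalfBall n 1, u t p ≤ v t p := by
  intro t ht p hp
  have hw := hu.sub hv
  have hsphere' : ∀ t ∈ Icc (-1 : ℝ) T, ∀ p ∈ closedSpherePlus n, (u - v) t p ≤ 0 :=
    fun t ht p hp => sub_nonpos.2 (hsphere t ht p hp)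
  have hbase : ∀ x : En n, ‖x‖ < 1 → (u - v) t (x, 0) ≤ 0 := fun x hx => by
    refine le_of_forall_pos_le_add fun ε hε => ?_
    have hle := hw.base_le_mul_time ha hT hsphere' (fun x hx => sub_nonpos.2 (hinit x hx))
      hε t ht x hx.le
    nlinarith [ht.2]
  exact sub_nonpos.1 (hw.le_of_le_on_boundary ha ⟨ht.1, ht.2.trans hT⟩ (hsphere' t ht) hbase p hp)

end IsFracHeatSolution

lemma isFracHeatSolution_quadraticPoly (ha : -1 < a) (c : ℝ) (b : En n) {m l : ℝ}
    (hml : n * m + (1 + a) * l = 0) :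
    IsFracHeatSolution a fun _ => quadraticPoly c b 0 m l := by
  refine ⟨((contDiff_quadraticPoly c b 0 m l).continuous.comp continuous_snd).continuousOn,
    fun _ _ => ⟨(contDiff_quadraticPoly c b 0 m l).contDiffOn, fun p hp => ?_⟩,
    fun t _ x _ => ⟨differentiableWithinAt_const _, ?_⟩⟩
  · have hL := aLaplacian_quadraticPoly a c b 0 m l hp.2.ne'
    rw [mul_zero, zero_div] at hL
    exact hL.trans (by linear_combination 2 * hml)
  · rw [derivWithin_fun_const]
    have hcont : Continuous fun y : ℝ => 2 * l * y ^ (a + 1) :=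
      (Real.continuous_rpow_const (by linarith)).const_mul _
    have hlim : Tendsto (fun y : ℝ => 2 * l * y ^ (a + 1)) (𝓝[>] 0) (𝓝 0) := by
      simpa [Real.zero_rpow (by linarith : a + 1 ≠ 0)]
        using (hcont.tendsto 0).mono_left nhdsWithin_le_nhds
    refine hlim.congr' (eventually_mem_nhdsWithin.mono fun y hy => ?_)
    beta_reduce
    rw [fderiv_quadraticPoly_vertical, Real.rpow_add_one (ne_of_gt hy)]
    ring

/-- The solution `t + y^{2s} / (2s)`, whose base values grow linearly in time. -/
def caloricLift (s t : ℝ) (p : En n × ℝ) : ℝ := t + p.2 ^ (2 * s) / (2 * s)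

section CaloricLift

variable {s t : ℝ} {p : En n × ℝ}

lemma contDiffAt_caloricLift (hp : 0 < p.2) : ContDiffAt ℝ 2 (caloricLift s t) p :=
  contDiffAt_const.add
    ((contDiffAt_snd.rpow_const_of_ne hp.ne').div_const _)

lemma hasFDerivAt_snd_rpow (c : ℝ) (hp : 0 < p.2) :
    HasFDerivAt (fun q : En n × ℝ => q.2 ^ c)
      ((c * p.2 ^ (c - 1)) • ContinuousLinearMap.snd ℝ (En n) ℝ) p :=
  (Real.hasDerivAt_rpow_const (Or.inl hp.ne')).comp_hasFDerivAt p hasFDerivAt_snd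

lemma fderiv_caloricLift_apply (hs : s ≠ 0) (hp : 0 < p.2) (w : En n × ℝ) :
    fderiv ℝ (caloricLift s t) p w = p.2 ^ (2 * s - 1) * w.2 := by
  have hderiv := (((hasFDerivAt_snd_rpow (2 * s) hp).mul_const (2 * s)⁻¹).const_add t).fderiv
  have hfun : caloricLift s t = fun q : En n × ℝ => t + q.2 ^ (2 * s) * (2 * s)⁻¹ := rfl
  rw [hfun, hderiv]
  simp only [smul_apply, ContinuousLinearMap.coe_snd', smul_eq_mul]
  field_simp

lemma D2_caloricLift (hs : s ≠ 0) (hp : 0 < p.2) (w : En n × ℝ) :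
    D2 (caloricLift s t) p w = (2 * s - 1) * p.2 ^ (2 * s - 1 - 1) * w.2 ^ 2 := by
  have hfirst : (fun q : En n × ℝ => fderiv ℝ (caloricLift s t) q w) =ᶠ[𝓝 p]
      fun q => q.2 ^ (2 * s - 1) * w.2 := by
    filter_upwards [continuousAt_snd.eventually (lt_mem_nhds hp)] with q hq
      using fderiv_caloricLift_apply hs hq w
  rw [D2, hfirst.fderiv_eq, ((hasFDerivAt_snd_rpow (2 * s - 1) hp).mul_const w.2).fderiv]
  simp only [smul_apply, ContinuousLinearMap.coe_snd', smul_eq_mul]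
  ring

lemma isAHarmonicOn_caloricLift (hs : s ≠ 0) :
    IsAHarmonicOn (1 - 2 * s) (caloricLift (n := n) s t) (halfBall n 1) := by
  refine ⟨fun p hp => (contDiffAt_caloricLift hp.2).contDiffWithinAt, fun p hp => ?_⟩
  have hpow := Real.rpow_sub_one hp.2.ne' (2 * s - 1)
  simp only [lap, D2_caloricLift hs hp.2, fderiv_caloricLift_apply hs hp.2, hpow]
  simp only [ne_eq, OfNat.ofNat_ne_zero, not_false_eq_true, zero_pow, mul_zero,
    Finset.sum_const_zero, one_pow, mul_one, zero_add]
  ring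

lemma isFracHeatSolution_caloricLift (hs : 0 < s) :
    IsFracHeatSolution (1 - 2 * s) (caloricLift (n := n) s) := by
  refine ⟨?_, fun t _ => isAHarmonicOn_caloricLift hs.ne', fun t ht x _ => ?_⟩
  · have hrpow : Continuous fun q : ℝ × (En n × ℝ) => q.2.2 ^ (2 * s) :=
      (Real.continuous_rpow_const (by linarith)).comp (by fun_prop)
    exact (continuous_fst.add (hrpow.div_const _)).continuousOn
  have hderiv : HasDerivWithinAt (fun τ => caloricLift s τ (x, 0)) 1 (Ioc (-1 : ℝ) 0) t :=
    ((hasDerivAt_id t).add_const _).hasDerivWithinAt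
  refine ⟨hderiv.differentiableWithinAt, ?_⟩
  rw [hderiv.derivWithin (uniqueDiffOn_Ioc _ _ t ht)]
  refine tendsto_const_nhds.congr' (eventually_mem_nhdsWithin.mono fun y hy => ?_)
  beta_reduce
  rw [fderiv_caloricLift_apply hs.ne' (mem_Ioi.1 hy : 0 < (x, y).2), mul_one,
    ← Real.rpow_add hy]
  simp

end CaloricLift

end HeatSolutions

section TangentGap

variable {n : ℕ} {p q : En n × ℝ}

/-- The `ℓ¹` combination `|x - x'| + |y - y'|` in which all Hölder moduli are measured. -/
def l1Dist (p q : En n × ℝ) : ℝ := ‖p.1 - q.1‖ + |p.2 - q.2|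

/-- The height `1 - q · p` of `p` below the tangent hyperplane of the unit sphere at `q`; an affine
function of `p` comparable to a squared distance on the sphere. -/
def tangentGap (q p : En n × ℝ) : ℝ := 1 - ⟪q.1, p.1⟫ - q.2 * p.2

lemma l1Dist_nonneg (p q : En n × ℝ) : 0 ≤ l1Dist p q :=
  add_nonneg (norm_nonneg _) (abs_nonneg _)

lemma l1Dist_self (p : En n × ℝ) : l1Dist p p = 0 := by
  simp [l1Dist]

lemma eq_of_l1Dist_eq_zero (h : l1Dist p q = 0) : p = q := by
  obtain ⟨hx, hy⟩ := (add_eq_zero_iff_of_nonneg (norm_nonneg _) (abs_nonneg _)).1 h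
  exact Prod.ext (sub_eq_zero.1 (norm_eq_zero.1 hx)) (sub_eq_zero.1 (abs_eq_zero.1 hy))

lemma l1Dist_comm (p q : En n × ℝ) : l1Dist p q = l1Dist q p := by
  rw [l1Dist, l1Dist, norm_sub_rev, abs_sub_comm]

lemma l1Dist_triangle (p q o : En n × ℝ) : l1Dist p o ≤ l1Dist p q + l1Dist q o := by
  simp only [l1Dist]
  linarith [norm_sub_le_norm_sub_add_norm_sub p.1 q.1 o.1, abs_sub_le p.2 q.2 o.2]

lemma l1Dist_base (x x' : En n) : l1Dist (x, 0) (x', 0) = ‖x - x'‖ := by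
  simp [l1Dist]

lemma tangentGap_eq_quadraticPoly (q : En n × ℝ) :
    tangentGap q = quadraticPoly 1 (-q.1) (-q.2) 0 0 := by
  funext p
  simp only [tangentGap, quadraticPoly, inner_neg_left]
  ring

lemma two_mul_tangentGap (hq : q ∈ closedSpherePlus n) (p : En n × ℝ) :
    2 * tangentGap q p =
      ‖p.1 - q.1‖ ^ 2 + (p.2 - q.2) ^ 2 + (1 - ‖p.1‖ ^ 2 - p.2 ^ 2) := by
  rw [norm_sub_sq_real, real_inner_comm, tangentGap]
  linear_combination -hq.1

lemma one_sub_sq_nonneg (hp : p ∈ closedHalfBall n 1) : 0 ≤ 1 - ‖p.1‖ ^ 2 - p.2 ^ 2 := by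
  linarith [hp.1]

lemma one_sub_sq_le_tangentGap (hq : q ∈ closedSpherePlus n) (p : En n × ℝ) :
    1 - ‖p.1‖ ^ 2 - p.2 ^ 2 ≤ 2 * tangentGap q p := by
  linarith [two_mul_tangentGap hq p, sq_nonneg ‖p.1 - q.1‖, sq_nonneg (p.2 - q.2)]

lemma tangentGap_nonneg (hq : q ∈ closedSpherePlus n) (hp : p ∈ closedHalfBall n 1) :
    0 ≤ tangentGap q p := by
  linarith [one_sub_sq_le_tangentGap hq p, one_sub_sq_nonneg hp]

lemma sq_l1Dist_le_tangentGap (hq : q ∈ closedSpherePlus n) (hp : p ∈ closedHalfBall n 1) :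
    l1Dist p q ^ 2 ≤ 4 * tangentGap q p := by
  have hsq := add_sq_le (a := ‖p.1 - q.1‖) (b := |p.2 - q.2|)
  rw [sq_abs] at hsq
  exact hsq.trans (by linarith [two_mul_tangentGap hq p, one_sub_sq_nonneg hp])

lemma tangentGap_le_l1Dist (hq : q ∈ closedSpherePlus n) (p : En n × ℝ) :
    tangentGap q p ≤ l1Dist p q := by
  have hqball := closedSpherePlus_subset_closedHalfBall n hq
  calc tangentGap q p = ⟪q.1, q.1 - p.1⟫ + q.2 * (q.2 - p.2) := by
        rw [inner_sub_right, real_inner_self_eq_norm_sq, tangentGap]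
        linear_combination -hq.1
    _ ≤ 1 * ‖q.1 - p.1‖ + 1 * |q.2 - p.2| := by
        refine add_le_add ?_ ?_
        · exact (real_inner_le_norm _ _).trans
            (mul_le_mul_of_nonneg_right (norm_fst_le_one hqball) (norm_nonneg _))
        · exact (mul_le_mul_of_nonneg_left (le_abs_self _) hq.2).trans
            (mul_le_mul_of_nonneg_right (snd_le_one hqball) (abs_nonneg _))
    _ = l1Dist p q := by rw [one_mul, one_mul, l1Dist_comm, l1Dist]

end TangentGap

/-- Concavity of `z ↦ z ^ θ`, with the slope of the tangent at `r` relaxed. -/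
lemma rpow_le_rpow_mul_one_add_div {θ z r : ℝ} (hθ₀ : 0 ≤ θ) (hθ₁ : θ ≤ 1) (hz : 0 ≤ z)
    (hr : 0 < r) : z ^ θ ≤ r ^ θ * (1 + z / r) := by
  have hquot : (z / r) ^ θ ≤ 1 + z / r := by
    rcases le_total (z / r) 1 with h | h
    · linarith [Real.rpow_le_one (by positivity) h hθ₀, div_nonneg hz hr.le]
    · linarith [Real.rpow_le_self_of_one_le h hθ₁]
  calc z ^ θ = r ^ θ * (z / r) ^ θ := by
        rw [← Real.mul_rpow hr.le (by positivity), mul_div_cancel₀ _ hr.ne']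
    _ ≤ r ^ θ * (1 + z / r) := by gcongr

lemma rpow_two_mul_le_of_sq_le {θ d z r : ℝ} (hθ₀ : 0 ≤ θ) (hθ₁ : θ ≤ 1) (hd : 0 ≤ d) (hr : 0 < r)
    (hdz : d ^ 2 ≤ z) : d ^ (2 * θ) ≤ r ^ θ * (1 + z / r) := by
  rw [Real.rpow_mul hd, Real.rpow_two]
  exact (Real.rpow_le_rpow (sq_nonneg d) hdz hθ₀).trans
    (rpow_le_rpow_mul_one_add_div hθ₀ hθ₁ ((sq_nonneg d).trans hdz) hr)

lemma mul_rpow_le_mul {c x θ : ℝ} (hc : 1 ≤ c) (hx : 0 ≤ x) (hθ : θ ≤ 1) :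
    (c * x) ^ θ ≤ c * x ^ θ := by
  rw [Real.mul_rpow (by linarith) hx]
  gcongr
  exact Real.rpow_le_self_of_one_le hc hθ

lemma exists_unit_vector_dist_eq {E : Type*} [NormedAddCommGroup E] [NormedSpace ℝ E] {x : E}
    (hx : x ≠ 0) (hx₁ : ‖x‖ ≤ 1) : ∃ z : E, ‖z‖ = 1 ∧ ‖x - z‖ = 1 - ‖x‖ := by
  have hpos : 0 < ‖x‖ := norm_pos_iff.2 hx
  refine ⟨‖x‖⁻¹ • x, by simp [norm_smul, hpos.ne'], ?_⟩
  have hdiff : x - ‖x‖⁻¹ • x = (1 - ‖x‖⁻¹) • x := by rw [sub_smul, one_smul]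
  have hinv : 1 ≤ ‖x‖⁻¹ := (one_le_inv₀ hpos).2 hx₁
  rw [hdiff, norm_smul, Real.norm_eq_abs, abs_of_nonpos (by linarith)]
  field_simp
  ring

section HolderData

variable {n : ℕ} {s α C₀ : ℝ} {u : ℝ → En n × ℝ → ℝ}

/-- Solutions bounded by `C₀` with `C₀`-Hölder data of exponent `α` on the initial slice, in time
on the edge `|x| = 1`, `y = 0`, and on the upper sphere at each time. -/
structure IsHolderDataSolution (s α C₀ : ℝ) (u : ℝ → En n × ℝ → ℝ) : Prop where
  isSolution : IsFracHeatSolution (1 - 2 * s) u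
  abs_le_interior : ∀ t ∈ Icc (-1 : ℝ) 0, ∀ p ∈ halfBall n 1, |u t p| ≤ C₀
  initial : ∀ p ∈ closedHalfBall n 1, ∀ q ∈ closedHalfBall n 1,
    |u (-1) p - u (-1) q| ≤ C₀ * l1Dist p q ^ α
  edge : ∀ t ∈ Icc (-1 : ℝ) 0, ∀ t' ∈ Icc (-1 : ℝ) 0, ∀ x : En n, ‖x‖ = 1 →
    |u t (x, 0) - u t' (x, 0)| ≤ C₀ * |t - t'| ^ α
  sphere : ∀ t ∈ Icc (-1 : ℝ) 0, ∀ p ∈ closedSpherePlus n, ∀ q ∈ closedSpherePlus n,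
    |u t p - u t q| ≤ C₀ * l1Dist p q ^ α

namespace IsHolderDataSolution

lemma neg (h : IsHolderDataSolution s α C₀ u) : IsHolderDataSolution s α C₀ (-u) where
  isSolution := h.isSolution.neg
  abs_le_interior t ht p hp := by simpa using h.abs_le_interior t ht p hp
  initial p hp q hq := by
    simpa [neg_add_eq_sub, abs_sub_comm] using h.initial p hp q hq
  edge t ht t' ht' x hx := by
    simpa [neg_add_eq_sub, abs_sub_comm] using h.edge t ht t' ht' x hx
  sphere t ht p hp q hq := by
    simpa [neg_add_eq_sub, abs_sub_comm] using h.sphere t ht p hp q hq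

lemma abs_le (h : IsHolderDataSolution s α C₀ u) {t : ℝ} (ht : t ∈ Icc (-1 : ℝ) 0)
    {p : En n × ℝ} (hp : p ∈ closedHalfBall n 1) : |u t p| ≤ C₀ := by
  have hcont := (h.isSolution.continuousOn_slice ht).abs
  rw [← closure_halfBall] at hcont hp
  exact le_on_closure (h.abs_le_interior t ht) hcont continuousOn_const hp

lemma bound_nonneg (h : IsHolderDataSolution s α C₀ u) : 0 ≤ C₀ :=
  (abs_nonneg _).trans
    (h.abs_le (t := 0) (by norm_num) (base_mem_closedHalfBall (x := 0) (by simp)))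

lemma sub_le_two_mul (h : IsHolderDataSolution s α C₀ u) {t t' : ℝ} (ht : t ∈ Icc (-1 : ℝ) 0)
    (ht' : t' ∈ Icc (-1 : ℝ) 0) {p q : En n × ℝ} (hp : p ∈ closedHalfBall n 1)
    (hq : q ∈ closedHalfBall n 1) : u t p - u t' q ≤ 2 * C₀ := by
  linarith [le_of_abs_le (h.abs_le ht hp), neg_le_of_abs_le (h.abs_le ht' hq)]

end IsHolderDataSolution

end HolderData

section EdgeBarrier

variable {n : ℕ} {a s α C₀ r T t : ℝ} {z : En n} {p : En n × ℝ} {u : ℝ → En n × ℝ → ℝ}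

/-- Barrier for the increments of a solution from the edge point `z` at time `T`. The first term
dominates the Hölder data in space at scale `r` and the second, through `caloricLift`, the data in
time at the scale `r ^ s`. -/
def edgeBarrier (s α r T : ℝ) (z : En n) (t : ℝ) (p : En n × ℝ) : ℝ :=
  r ^ (α / 2) * (1 + 4 * tangentGap (z, 0) p / r) +
    (r ^ s) ^ α * (1 + (T - t) / r ^ s +
      (1 + 4 * tangentGap (z, 0) p / r - p.2 ^ (2 * s) / r ^ s) / (2 * s))

lemma isFracHeatSolution_const (ha : -1 < a) (c : ℝ) :
    IsFracHeatSolution (n := n) a fun _ _ => c := by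
  convert isFracHeatSolution_quadraticPoly (n := n) ha c 0 (m := 0) (l := 0) (by ring) using 3
  simp [quadraticPoly]

lemma isFracHeatSolution_edgeBarrier (hs : s ∈ Ioo (0 : ℝ) 1) (hr : 0 < r) :
    IsFracHeatSolution (1 - 2 * s) (edgeBarrier s α r T z) := by
  have hs₀ := hs.1.ne'
  have hR : r ^ s ≠ 0 := (Real.rpow_pos_of_pos hr s).ne'
  set A := r ^ (α / 2)
  set B := (r ^ s) ^ α
  set k := 4 * (A + B / (2 * s)) / r with hk
  have haffine := isFracHeatSolution_quadraticPoly (n := n) (a := 1 - 2 * s) (m := 0) (l := 0)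
    (by linarith [hs.2]) (A + B * (1 + T / r ^ s + 1 / (2 * s)) + k) (-(k • z)) (by ring)
  convert haffine.add ((isFracHeatSolution_caloricLift hs.1).const_smul (-(B / r ^ s)))
    using 1
  funext t p
  simp only [edgeBarrier, tangentGap, quadraticPoly, caloricLift, Pi.add_apply, Pi.smul_apply,
    smul_eq_mul, inner_neg_left, real_inner_smul_left, hk]
  field_simp
  ring

lemma snd_rpow_le_of_edge (hs : s ∈ Ioo (0 : ℝ) 1) (hr : 0 < r) (hz : ‖z‖ = 1)
    (hp : p ∈ closedHalfBall n 1) :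
    p.2 ^ (2 * s) ≤ r ^ s * (1 + 4 * tangentGap (z, 0) p / r) := by
  have hsnd : p.2 ≤ l1Dist p (z, 0) := by
    simp [l1Dist, abs_of_nonneg hp.2]
  exact rpow_two_mul_le_of_sq_le hs.1.le hs.2.le hp.2 hr ((pow_le_pow_left₀ hp.2 hsnd 2).trans
    (sq_l1Dist_le_tangentGap (base_mem_closedSpherePlus hz) hp))

lemma l1Dist_rpow_le_tangentGap {q : En n × ℝ} (hα : α ∈ Ioc (0 : ℝ) 1) (hr : 0 < r)
    (hq : q ∈ closedSpherePlus n) (hp : p ∈ closedHalfBall n 1) :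
    l1Dist p q ^ α ≤ r ^ (α / 2) * (1 + 4 * tangentGap q p / r) := by
  have hle := rpow_two_mul_le_of_sq_le (θ := α / 2) (by linarith [hα.1]) (by linarith [hα.2])
    (l1Dist_nonneg p q) hr (sq_l1Dist_le_tangentGap hq hp)
  rwa [mul_div_cancel₀ α two_ne_zero] at hle

lemma le_edgeBarrier (hs : s ∈ Ioo (0 : ℝ) 1) (hα : α ∈ Ioc (0 : ℝ) 1) (hr : 0 < r)
    (hz : ‖z‖ = 1) (ht : t ≤ T) (hp : p ∈ closedHalfBall n 1) :
    l1Dist p (z, 0) ^ α + |t - T| ^ α ≤ edgeBarrier s α r T z t p := by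
  have hR : 0 < r ^ s := Real.rpow_pos_of_pos hr s
  have hspace := l1Dist_rpow_le_tangentGap hα hr (base_mem_closedSpherePlus hz) hp
  have htime := rpow_le_rpow_mul_one_add_div hα.1.le hα.2 (sub_nonneg.2 ht) hR
  have hheight : 0 ≤ (1 + 4 * tangentGap (z, 0) p / r - p.2 ^ (2 * s) / r ^ s) / (2 * s) := by
    refine div_nonneg (sub_nonneg.2 ?_) (by linarith [hs.1])
    exact (div_le_iff₀' hR).2 (snd_rpow_le_of_edge hs hr hz hp)
  rw [abs_sub_comm, abs_of_nonneg (sub_nonneg.2 ht)]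
  exact add_le_add hspace (htime.trans
    (mul_le_mul_of_nonneg_left (le_add_of_nonneg_right hheight) (by positivity)))

lemma edgeBarrier_self_le (hs : 0 < s) (hr : 0 < r) (hp : 0 ≤ p.2) :
    edgeBarrier s α r T z T p ≤ r ^ (α / 2) * (1 + 4 * tangentGap (z, 0) p / r) +
      (r ^ s) ^ α * (1 + (1 + 4 * tangentGap (z, 0) p / r) / (2 * s)) := by
  have hdrop : 0 ≤ p.2 ^ (2 * s) / r ^ s := by positivity
  rw [edgeBarrier, sub_self, zero_div, add_zero]
  gcongr
  linarith

theorem IsHolderDataSolution.sub_edge_le (h : IsHolderDataSolution s α C₀ u)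
    (hs : s ∈ Ioo (0 : ℝ) 1) (hα : α ∈ Ioc (0 : ℝ) 1) (hT : T ∈ Icc (-1 : ℝ) 0) (hz : ‖z‖ = 1)
    (hr : 0 < r) (hp : p ∈ closedHalfBall n 1) :
    u T p - u T (z, 0) ≤ C₀ * (r ^ (α / 2) * (1 + 4 * tangentGap (z, 0) p / r) +
      (r ^ s) ^ α * (1 + (1 + 4 * tangentGap (z, 0) p / r) / (2 * s))) := by
  have hC₀ := h.bound_nonneg
  have ha : -1 < 1 - 2 * s := by linarith [hs.2]
  have hzS := base_mem_closedSpherePlus hz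
  have hzK := closedSpherePlus_subset_closedHalfBall n hzS
  have hbdry : ∀ t ∈ Icc (-1 : ℝ) T, ∀ q ∈ closedHalfBall n 1,
      |u t q - u t (z, 0)| ≤ C₀ * l1Dist q (z, 0) ^ α →
      u t q ≤ u T (z, 0) + C₀ * edgeBarrier s α r T z t q := fun t ht q hq hspace => by
    have htime := h.edge t ⟨ht.1, ht.2.trans hT.2⟩ T hT z hz
    have hbarrier := mul_le_mul_of_nonneg_left (le_edgeBarrier hs hα hr hz ht.2 hq) hC₀
    linarith [le_of_abs_le hspace, le_of_abs_le htime]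
  have hcomp := h.isSolution.comparison ha ((isFracHeatSolution_const ha (u T (z, 0))).add
    ((isFracHeatSolution_edgeBarrier (α := α) (T := T) (z := z) hs hr).const_smul C₀)) hT.2
    (fun t ht q hq => hbdry t ht q (closedSpherePlus_subset_closedHalfBall n hq)
      (h.sphere t ⟨ht.1, ht.2.trans hT.2⟩ q hq _ hzS))
    (fun x hx => hbdry (-1) ⟨le_rfl, hT.1⟩ _ (base_mem_closedHalfBall hx.le)
      (h.initial _ (base_mem_closedHalfBall hx.le) _ hzK)) T ⟨hT.1, le_rfl⟩ p hp
  exact sub_le_iff_le_add'.2 (hcomp.trans (add_le_add_right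
    (mul_le_mul_of_nonneg_left (edgeBarrier_self_le hs.1 hr hp.2) hC₀) _))

end EdgeBarrier

section SphereBarrier

variable {n : ℕ} {s α C₀ r t : ℝ} {p q : En n × ℝ} {u : ℝ → En n × ℝ → ℝ}

/-- The tangent gap at `q`, corrected to be `(1 - 2s)`-superharmonic on `{y ≥ q.2 / 2}`. -/
def sphereBarrier (s : ℝ) (q p : En n × ℝ) : ℝ :=
  tangentGap q p + (1 - ‖p.1‖ ^ 2 - p.2 ^ 2) / (2 - 2 * s)

lemma sphereBarrier_eq_quadraticPoly (s : ℝ) (q : En n × ℝ) :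
    sphereBarrier s q = quadraticPoly (1 + 1 / (2 - 2 * s)) (-q.1) (-q.2)
      (-1 / (2 - 2 * s)) (-1 / (2 - 2 * s)) := by
  funext p
  rw [sphereBarrier, tangentGap_eq_quadraticPoly]
  simp only [quadraticPoly]
  ring

lemma contDiff_sphereBarrier (s : ℝ) (q : En n × ℝ) : ContDiff ℝ 2 (sphereBarrier s q) :=
  sphereBarrier_eq_quadraticPoly s q ▸ contDiff_quadraticPoly ..

lemma aLaplacian_sphereBarrier_nonpos (hs : s ∈ Ioo (0 : ℝ) 1) (hq : 0 < q.2)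
    (hp : q.2 / 2 < p.2) : aLaplacian (1 - 2 * s) (sphereBarrier s q) p ≤ 0 := by
  have hp₀ : 0 < p.2 := by linarith
  have hs₁ : 0 < 1 - s := by linarith [hs.2]
  have hdrift : -(1 - 2 * s) * (q.2 / p.2) ≤ 2 := by
    have hratio : q.2 / p.2 ≤ 2 := by rw [div_le_iff₀ hp₀]; linarith
    nlinarith [hs.1, hs.2, div_pos hq hp₀]
  rw [sphereBarrier_eq_quadraticPoly, aLaplacian_quadraticPoly _ _ _ _ _ _ hp₀.ne']
  calc _ = -(n / (1 - s)) - 2 + -(1 - 2 * s) * (q.2 / p.2) := by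
        rw [← mul_one_sub]
        field_simp
        ring
    _ ≤ 0 := by linarith [div_nonneg n.cast_nonneg hs₁.le]

lemma tangentGap_le_sphereBarrier (hs : s < 1) (hp : p ∈ closedHalfBall n 1) :
    tangentGap q p ≤ sphereBarrier s q p :=
  le_add_of_nonneg_right (div_nonneg (one_sub_sq_nonneg hp) (by linarith))

lemma sphereBarrier_le (hs : s < 1) (hq : q ∈ closedSpherePlus n) (p : En n × ℝ) :
    sphereBarrier s q p ≤ (1 + 1 / (1 - s)) * tangentGap q p := by
  calc sphereBarrier s q p ≤ tangentGap q p + 2 * tangentGap q p / (2 - 2 * s) := by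
        have hs₂ : 0 ≤ 2 - 2 * s := by linarith
        rw [sphereBarrier]
        gcongr
        exact one_sub_sq_le_tangentGap hq p
    _ = (1 + 1 / (1 - s)) * tangentGap q p := by
        rw [← mul_one_sub, mul_div_mul_left _ _ two_ne_zero]
        ring

lemma sq_le_sphereBarrier_of_snd_eq_half (hs : s < 1) (hq : q ∈ closedSpherePlus n)
    (hp : p ∈ closedHalfBall n 1) (hpq : p.2 = q.2 / 2) : q.2 ^ 2 ≤ 8 * sphereBarrier s q p := by
  have hheight : (p.2 - q.2) ^ 2 = q.2 ^ 2 / 4 := by rw [hpq]; ring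
  linarith [two_mul_tangentGap hq p, tangentGap_le_sphereBarrier (q := q) hs hp,
    one_sub_sq_nonneg hp, sq_nonneg ‖p.1 - q.1‖]

lemma mem_sphere_or_snd_eq_of_notMem {c : ℝ} (hc : 0 < c)
    (hp : p ∈ closedHalfBall n 1 ∩ {o | c ≤ o.2}) (hpΩ : p ∉ halfBall n 1 ∩ {o | c < o.2}) :
    p ∈ closedSpherePlus n ∨ p.2 = c := by
  rcases mem_halfBall_or_base_or_sphere hp.1 with hint | ⟨hbase, -⟩ | hS
  · exact .inr (le_antisymm (not_lt.1 fun hlt => hpΩ ⟨hint, hlt⟩) hp.2)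
  · exact absurd (hbase ▸ hp.2 : c ≤ 0) hc.not_ge
  · exact .inl hS

lemma le_sphereBarrier_on_boundary (h : IsHolderDataSolution s α C₀ u) (hs : s < 1)
    (hα : α ∈ Ioc (0 : ℝ) 1) (ht : t ∈ Icc (-1 : ℝ) 0) (hq : q ∈ closedSpherePlus n)
    (hq₀ : 0 < q.2) (hr : 0 < r) (hp : p ∈ closedHalfBall n 1)
    (hbdry : p ∈ closedSpherePlus n ∨ p.2 = q.2 / 2) :
    u t p - u t q ≤ C₀ * (r ^ (α / 2) * (1 + 4 * sphereBarrier s q p / r) +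
      16 / q.2 ^ 2 * sphereBarrier s q p) := by
  have hC₀ := h.bound_nonneg
  have hgap := tangentGap_le_sphereBarrier (q := q) hs hp
  have hΨ : 0 ≤ sphereBarrier s q p := (tangentGap_nonneg hq hp).trans hgap
  rcases hbdry with hpS | hpq
  · calc u t p - u t q ≤ C₀ * l1Dist p q ^ α := le_of_abs_le (h.sphere t ht p hpS q hq)
      _ ≤ C₀ * (r ^ (α / 2) * (1 + 4 * sphereBarrier s q p / r)) := by
          have hmodulus := l1Dist_rpow_le_tangentGap hα hr hq hp
          gcongr
          exact hmodulus.trans (by gcongr)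
      _ ≤ _ := mul_le_mul_of_nonneg_left (le_add_of_nonneg_right (by positivity)) hC₀
  · calc u t p - u t q ≤ C₀ * 2 := by
          linarith [h.sub_le_two_mul ht ht hp (closedSpherePlus_subset_closedHalfBall n hq)]
      _ ≤ C₀ * (16 / q.2 ^ 2 * sphereBarrier s q p) := by
          gcongr
          rw [div_mul_eq_mul_div, le_div_iff₀ (by positivity)]
          linarith [sq_le_sphereBarrier_of_snd_eq_half hs hq hp hpq]
      _ ≤ _ := mul_le_mul_of_nonneg_left (le_add_of_nonneg_left (by positivity)) hC₀

theorem IsHolderDataSolution.sub_sphere_le (h : IsHolderDataSolution s α C₀ u)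
    (hs : s ∈ Ioo (0 : ℝ) 1) (hα : α ∈ Ioc (0 : ℝ) 1) (ht : t ∈ Icc (-1 : ℝ) 0)
    (hq : q ∈ closedSpherePlus n) (hq₀ : 0 < q.2) (hr : 0 < r) (hp : p ∈ closedHalfBall n 1)
    (hpq : q.2 / 2 ≤ p.2) :
    u t p - u t q ≤ C₀ * (r ^ (α / 2) * (1 + 4 * sphereBarrier s q p / r) +
      16 / q.2 ^ 2 * sphereBarrier s q p) := by
  have hC₀ := h.bound_nonneg
  set k := C₀ * (r ^ (α / 2) * (4 / r) + 16 / q.2 ^ 2) with hk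
  have hk₀ : 0 ≤ k := by positivity
  have hexpand : ∀ o : En n × ℝ,
      C₀ * (r ^ (α / 2) * (1 + 4 * sphereBarrier s q o / r) + 16 / q.2 ^ 2 * sphereBarrier s q o) =
        C₀ * r ^ (α / 2) + k * sphereBarrier s q o := fun o => by rw [hk]; ring
  suffices hmax : ∀ o ∈ closedHalfBall n 1 ∩ {o | q.2 / 2 ≤ o.2},
      (u t + (-k) • sphereBarrier s q) o ≤ u t q + C₀ * r ^ (α / 2) by
    have hle := hmax p ⟨hp, hpq⟩
    simp only [Pi.add_apply, Pi.smul_apply, smul_eq_mul] at hle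
    linarith [hexpand p]
  have hΩ : IsOpen (halfBall n 1 ∩ {o | q.2 / 2 < o.2}) :=
    (isOpen_halfBall n 1).inter (isOpen_lt continuous_const continuous_snd)
  have hharm := h.isSolution.2.1 t ht
  have hbarrier : ContDiff ℝ 2 ((-k) • sphereBarrier s q) :=
    (contDiff_sphereBarrier s q).const_smul (-k)
  refine le_of_aLaplacian_nonneg (a := 1 - 2 * s) (by linarith [hs.2])
    ((isCompact_closedHalfBall n).inter_right (isClosed_le continuous_const continuous_snd)) hΩ
    (inter_subset_inter (halfBall_subset_closedHalfBall n 1)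
      (ofPred_subset_ofPred.2 fun _ => le_of_lt))
    (fun o ho => ho.1.2) (((h.isSolution.continuousOn_slice ht).mono inter_subset_left).add
      hbarrier.continuous.continuousOn)
    ((hharm.1.mono inter_subset_left).add hbarrier.contDiffOn)
    (fun o ho => ?_) (fun o ho => ?_)
  · rw [aLaplacian_add _ (hharm.1.contDiffAt ((isOpen_halfBall n 1).mem_nhds ho.1))
      hbarrier.contDiffAt, aLaplacian_smul]
    have hzero : aLaplacian (1 - 2 * s) (u t) o = 0 := hharm.2 o ho.1
    nlinarith [aLaplacian_sphereBarrier_nonpos hs hq₀ ho.2]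
  · have hle := le_sphereBarrier_on_boundary h hs.2 hα ht hq hq₀ hr ho.1.1
      (mem_sphere_or_snd_eq_of_notMem (half_pos hq₀) ho.1 ho.2)
    simp only [Pi.add_apply, Pi.smul_apply, smul_eq_mul]
    linarith [hexpand o]

end SphereBarrier

section InitialBarrier

variable {n : ℕ} {s α C₀ τ T t : ℝ} {x₀ : En n} {p : En n × ℝ} {u : ℝ → En n × ℝ → ℝ}

/-- The coefficient of `y ^ 2` that makes `|x| ^ 2 - κ y ^ 2` a `(1 - 2s)`-harmonic function. -/
def harmonicCoeff (n : ℕ) (s : ℝ) : ℝ := n / (2 - 2 * s)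

/-- A solution that dominates the squared distance to `(x₀, 0)` and vanishes there at time `-1`. -/
def initialBarrier (s : ℝ) (x₀ : En n) (t : ℝ) (p : En n × ℝ) : ℝ :=
  ‖p.1 - x₀‖ ^ 2 - harmonicCoeff n s * p.2 ^ 2 +
    (harmonicCoeff n s + 1) * (p.2 ^ (2 * s) + 2 * s * (t + 1))

lemma harmonicCoeff_nonneg (n : ℕ) (hs : s < 1) : 0 ≤ harmonicCoeff n s :=
  div_nonneg n.cast_nonneg (by linarith)

lemma isFracHeatSolution_initialBarrier (hs : s ∈ Ioo (0 : ℝ) 1) (x₀ : En n) :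
    IsFracHeatSolution (1 - 2 * s) (initialBarrier s x₀) := by
  have hs₀ := hs.1.ne'
  have hs₁ : 2 - 2 * s ≠ 0 := by linarith [hs.2]
  have hpoly := isFracHeatSolution_quadraticPoly (n := n) (a := 1 - 2 * s) (m := 1)
    (l := -harmonicCoeff n s) (by linarith [hs.2]) (‖x₀‖ ^ 2 + 2 * s * (harmonicCoeff n s + 1))
    ((-2 : ℝ) • x₀)
    (by rw [harmonicCoeff]; linear_combination -(mul_div_cancel₀ (n : ℝ) hs₁))
  convert hpoly.add ((isFracHeatSolution_caloricLift hs.1).const_smul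
    (2 * s * (harmonicCoeff n s + 1))) using 1
  funext t p
  simp only [initialBarrier, quadraticPoly, caloricLift, Pi.add_apply, Pi.smul_apply,
    smul_eq_mul, norm_sub_rev p.1 x₀, norm_sub_sq_real, real_inner_smul_left]
  field_simp
  ring

lemma sq_add_sq_le_initialBarrier (hs : s ∈ Ioo (0 : ℝ) 1) (x₀ : En n) (ht : -1 ≤ t)
    (hp : p ∈ closedHalfBall n 1) : ‖p.1 - x₀‖ ^ 2 + p.2 ^ 2 ≤ initialBarrier s x₀ t p := by
  have hpow : p.2 ^ 2 ≤ p.2 ^ (2 * s) := by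
    rw [← Real.rpow_two]
    exact Real.rpow_le_rpow_of_exponent_ge_of_imp hp.2 (snd_le_one hp) (by linarith [hs.2])
      fun _ h => by linarith [hs.1]
  have htime : 0 ≤ 2 * s * (t + 1) := mul_nonneg (by linarith [hs.1]) (by linarith)
  have hK := mul_le_mul_of_nonneg_left (add_le_add hpow htime)
    (add_nonneg (harmonicCoeff_nonneg n hs.2) zero_le_one)
  rw [initialBarrier]
  linarith

lemma sq_le_initialBarrier_of_sphere (hs : s ∈ Ioo (0 : ℝ) 1) (x₀ : En n) (ht : -1 ≤ t)
    (hp : p ∈ closedSpherePlus n) : (1 - ‖x₀‖) ^ 2 ≤ initialBarrier s x₀ t p := by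
  have hpK := closedSpherePlus_subset_closedHalfBall n hp
  have htri : (‖p.1‖ - ‖x₀‖) ^ 2 ≤ ‖p.1 - x₀‖ ^ 2 :=
    sq_le_sq.2 ((abs_norm_sub_norm_le _ _).trans (le_abs_self _))
  nlinarith [sq_add_sq_le_initialBarrier hs x₀ ht hpK, hp.1,
    mul_nonneg (norm_nonneg x₀) (sub_nonneg.2 (norm_fst_le_one hpK))]

lemma initialBarrier_self_le (hs : s ∈ Ioo (0 : ℝ) 1) (x₀ : En n) (ht : -1 ≤ t) :
    initialBarrier s x₀ t (x₀, 0) ≤ 2 * (harmonicCoeff n s + 1) * (t + 1) := by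
  have hK := harmonicCoeff_nonneg n hs.2
  have hzero : (0 : ℝ) ^ (2 * s) = 0 := Real.zero_rpow (by linarith [hs.1])
  simp only [initialBarrier, sub_self, norm_zero, hzero]
  nlinarith [mul_nonneg (add_nonneg hK zero_le_one) (by linarith : 0 ≤ t + 1), hs.2]

lemma two_le_initialBarrier_of_sphere (hs : s ∈ Ioo (0 : ℝ) 1) (hx₀ : ‖x₀‖ < 1) (ht : -1 ≤ t)
    (hp : p ∈ closedSpherePlus n) : 2 ≤ 2 / (1 - ‖x₀‖) ^ 2 * initialBarrier s x₀ t p := by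
  rw [div_mul_eq_mul_div, le_div_iff₀ (pow_pos (sub_pos.2 hx₀) 2)]
  linarith [sq_le_initialBarrier_of_sphere hs x₀ ht hp]

lemma l1Dist_rpow_le_initialBarrier (hs : s ∈ Ioo (0 : ℝ) 1) (hα : α ∈ Ioc (0 : ℝ) 1)
    (hτ : 0 < τ) (x₀ : En n) {x : En n} (hx : ‖x‖ ≤ 1) :
    l1Dist (x, 0) (x₀, 0) ^ α ≤ τ ^ (α / 2) * (1 + initialBarrier s x₀ (-1) (x, 0) / τ) := by
  have hsq : l1Dist (x, 0) (x₀, 0) ^ 2 ≤ initialBarrier s x₀ (-1) (x, 0) := by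
    simpa [l1Dist_base] using
      sq_add_sq_le_initialBarrier hs x₀ le_rfl (base_mem_closedHalfBall hx)
  have hle := rpow_two_mul_le_of_sq_le (θ := α / 2) (by linarith [hα.1]) (by linarith [hα.2])
    (l1Dist_nonneg _ _) hτ hsq
  rwa [mul_div_cancel₀ α two_ne_zero] at hle

theorem IsHolderDataSolution.sub_initial_le (h : IsHolderDataSolution s α C₀ u)
    (hs : s ∈ Ioo (0 : ℝ) 1) (hα : α ∈ Ioc (0 : ℝ) 1) (hT : T ∈ Icc (-1 : ℝ) 0)
    (hx₀ : ‖x₀‖ < 1) (hτ : 0 < τ) :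
    u T (x₀, 0) - u (-1) (x₀, 0) ≤
      C₀ * (τ ^ (α / 2) * (1 + initialBarrier s x₀ T (x₀, 0) / τ) +
        2 / (1 - ‖x₀‖) ^ 2 * initialBarrier s x₀ T (x₀, 0)) := by
  have hC₀ := h.bound_nonneg
  have ha : -1 < 1 - 2 * s := by linarith [hs.2]
  have hx₀K := base_mem_closedHalfBall hx₀.le
  set k := C₀ * (τ ^ (α / 2) / τ + 2 / (1 - ‖x₀‖) ^ 2) with hk
  have hexpand : ∀ w : ℝ, C₀ * (τ ^ (α / 2) * (1 + w / τ) + 2 / (1 - ‖x₀‖) ^ 2 * w) =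
      C₀ * τ ^ (α / 2) + k * w := fun w => by rw [hk]; ring
  suffices hbdry : ∀ t ∈ Icc (-1 : ℝ) T, ∀ p ∈ closedHalfBall n 1,
      (p ∈ closedSpherePlus n ∨ t = -1 ∧ p.2 = 0) →
      u t p ≤ u (-1) (x₀, 0) + C₀ * τ ^ (α / 2) + k * initialBarrier s x₀ t p by
    have hcomp := h.isSolution.comparison ha
      ((isFracHeatSolution_const ha (u (-1) (x₀, 0) + C₀ * τ ^ (α / 2))).add
        ((isFracHeatSolution_initialBarrier hs x₀).const_smul k)) hT.2
      (fun t ht p hp => hbdry t ht p (closedSpherePlus_subset_closedHalfBall n hp) (.inl hp))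
      (fun x hx => hbdry _ (left_mem_Icc.2 hT.1) _ (base_mem_closedHalfBall hx.le)
        (.inr ⟨rfl, rfl⟩)) T ⟨hT.1, le_rfl⟩ _ hx₀K
    simp only [Pi.add_apply, Pi.smul_apply, smul_eq_mul] at hcomp
    linarith [hexpand (initialBarrier s x₀ T (x₀, 0))]
  intro t ht p hp hcases
  have hw : 0 ≤ initialBarrier s x₀ t p :=
    (by positivity : (0 : ℝ) ≤ _).trans (sq_add_sq_le_initialBarrier hs x₀ ht.1 hp)
  rw [add_assoc, ← hexpand, mul_add]
  rcases hcases with hS | ⟨rfl, hbase⟩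
  · have hnonneg : 0 ≤ C₀ * (τ ^ (α / 2) * (1 + initialBarrier s x₀ t p / τ)) := by positivity
    linarith [mul_le_mul_of_nonneg_left (two_le_initialBarrier_of_sphere hs hx₀ ht.1 hS) hC₀,
      h.sub_le_two_mul ⟨ht.1, ht.2.trans hT.2⟩ (left_mem_Icc.2 (by norm_num)) hp hx₀K]
  · obtain ⟨x, y⟩ := p
    obtain rfl : y = 0 := hbase
    have hnonneg : 0 ≤ C₀ * (2 / (1 - ‖x₀‖) ^ 2 * initialBarrier s x₀ (-1) (x, 0)) := by
      positivity
    linarith [mul_le_mul_of_nonneg_left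
      (l1Dist_rpow_le_initialBarrier hs hα hτ x₀ (norm_fst_le_one hp)) hC₀,
      le_of_abs_le (h.initial _ hp _ hx₀K)]

end InitialBarrier

section HolderEstimates

variable {n : ℕ} {s α C₀ ρ T t t' : ℝ} {x x' z : En n} {p q : En n × ℝ} {u : ℝ → En n × ℝ → ℝ}

/-- The constant in the Hölder estimates at the boundary, for data with constant `1`. -/
def boundaryHolderConst (n : ℕ) (s : ℝ) : ℝ := 26 + 21 / (2 * s) + (8 + 3 * n) / (1 - s)

lemma boundaryHolderConst_ge (n : ℕ) (hs : s ∈ Ioo (0 : ℝ) 1) :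
    26 + 21 / (2 * s) ≤ boundaryHolderConst n s ∧
      9 + 8 / (1 - s) ≤ boundaryHolderConst n s ∧
      7 + 3 * n / (1 - s) ≤ boundaryHolderConst n s := by
  have hs₀ : 0 ≤ 21 / (2 * s) := div_nonneg (by norm_num) (by linarith [hs.1])
  have hs₁ : 0 < 1 - s := sub_pos.2 hs.2
  have h₈ : 0 ≤ 8 / (1 - s) := by positivity
  have h₃ : 0 ≤ 3 * n / (1 - s) := by positivity
  rw [boundaryHolderConst, add_div]
  exact ⟨by linarith, by linarith, by linarith⟩

lemma boundaryHolderConst_nonneg (n : ℕ) (hs : s ∈ Ioo (0 : ℝ) 1) :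
    0 ≤ boundaryHolderConst n s := by
  have hs₀ := hs.1
  exact (by positivity : (0 : ℝ) ≤ 26 + 21 / (2 * s)).trans (boundaryHolderConst_ge n hs).1

lemma scale_exponent_mem (hs : s ∈ Ioo (0 : ℝ) 1) (hα : α ∈ Ioc (0 : ℝ) 1) :
    s * α / 2 ∈ Ioo (0 : ℝ) (1 / 2) := by
  have hpos := mul_pos hs.1 hα.1
  have hlt : s * α < 1 := mul_lt_one_of_nonneg_of_lt_one_left hs.1.le hs.2 hα.2
  constructor <;> linarith

lemma pow_four_rpow_le_rpow_scale (hs : s ∈ Ioo (0 : ℝ) 1) (hα : α ∈ Ioc (0 : ℝ) 1) (hρ : 0 < ρ)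
    (hρ₁ : ρ ≤ 1) : (ρ ^ 4) ^ (α / 2) ≤ ρ ^ (s * α / 2) := by
  rw [← Real.rpow_natCast, ← Real.rpow_mul hρ.le]
  exact Real.rpow_le_rpow_of_exponent_ge hρ hρ₁ (by push_cast; nlinarith [hs.2, hα.1])

lemma sq_le_rpow_scale (hs : s ∈ Ioo (0 : ℝ) 1) (hα : α ∈ Ioc (0 : ℝ) 1) (hρ : 0 < ρ)
    (hρ₁ : ρ ≤ 1) : ρ ^ 2 ≤ ρ ^ (s * α / 2) := by
  rw [← Real.rpow_two]
  exact Real.rpow_le_rpow_of_exponent_ge hρ hρ₁ (by linarith [(scale_exponent_mem hs hα).2])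

lemma exists_scale (γ : ℝ) {D : ℝ} (hD : 0 < D) :
    ∃ ρ : ℝ, 0 < ρ ∧ ρ ^ 4 = D ∧ ρ ^ (γ / 2) = D ^ (γ / 8) := by
  refine ⟨D ^ (1 / 4 : ℝ), Real.rpow_pos_of_pos hD _, ?_, ?_⟩
  · rw [← Real.rpow_natCast, ← Real.rpow_mul hD.le]
    norm_num
  · rw [← Real.rpow_mul hD.le]
    congr 1
    ring

lemma rpow_le_two_mul_rpow {β γ d D : ℝ} (hγ₀ : 0 ≤ γ) (hγβ : γ ≤ β) (hβ : β ≤ 1) (hd : 0 ≤ d)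
    (hd₂ : d ≤ 2) (hdD : d ≤ D) : d ^ β ≤ 2 * D ^ γ := by
  have hhalf : 0 ≤ d / 2 := by linarith
  calc d ^ β = (2 * (d / 2)) ^ β := by rw [mul_div_cancel₀ d two_ne_zero]
    _ ≤ 2 * (d / 2) ^ β := mul_rpow_le_mul one_le_two hhalf hβ
    _ ≤ 2 * (d / 2) ^ γ := by
        gcongr 2 * ?_
        exact Real.rpow_le_rpow_of_exponent_ge_of_imp hhalf (by linarith) hγβ
          fun _ hβ₀ => by linarith
    _ ≤ 2 * D ^ γ := by
        gcongr
        linarith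

namespace IsHolderDataSolution

lemma sub_edge_le_of_scale (h : IsHolderDataSolution s α C₀ u) (hs : s ∈ Ioo (0 : ℝ) 1)
    (hα : α ∈ Ioc (0 : ℝ) 1) (ht : t ∈ Icc (-1 : ℝ) 0) (hρ : 0 < ρ) (hρ₁ : ρ ≤ 1)
    (hz : ‖z‖ = 1) (hp : p ∈ closedHalfBall n 1) {c : ℝ} (hpz : l1Dist p (z, 0) ≤ c * ρ) :
    u t p - u t (z, 0) ≤ ((1 + 4 * c) * (1 + 1 / (2 * s)) + 1) * C₀ * ρ ^ (s * α / 2) := by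
  have hC₀ := h.bound_nonneg
  have hs₀ := hs.1
  have hzS := base_mem_closedSpherePlus hz
  have hgap := tangentGap_nonneg hzS hp
  have hratio : 1 + 4 * tangentGap (z, 0) p / ρ ≤ 1 + 4 * c := by
    have hle := (tangentGap_le_l1Dist hzS p).trans hpz
    rw [add_le_add_iff_left, div_le_iff₀ hρ]
    linarith
  have hspace : ρ ^ (α / 2) ≤ ρ ^ (s * α / 2) :=
    Real.rpow_le_rpow_of_exponent_ge hρ hρ₁ (by nlinarith [hs.2, hα.1])
  have htime : (ρ ^ s) ^ α ≤ ρ ^ (s * α / 2) := by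
    rw [← Real.rpow_mul hρ.le]
    exact Real.rpow_le_rpow_of_exponent_ge hρ hρ₁ (by linarith [mul_pos hs.1 hα.1])
  calc u t p - u t (z, 0)
      ≤ C₀ * (ρ ^ (α / 2) * (1 + 4 * tangentGap (z, 0) p / ρ) +
          (ρ ^ s) ^ α * (1 + (1 + 4 * tangentGap (z, 0) p / ρ) / (2 * s))) :=
        h.sub_edge_le hs hα ht hz hρ hp
    _ ≤ C₀ * (ρ ^ (s * α / 2) * (1 + 4 * c) +
          ρ ^ (s * α / 2) * (1 + (1 + 4 * c) / (2 * s))) := by gcongr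
    _ = ((1 + 4 * c) * (1 + 1 / (2 * s)) + 1) * C₀ * ρ ^ (s * α / 2) := by ring

lemma sub_sphere_le_of_two_mul_le (h : IsHolderDataSolution s α C₀ u)
    (hs : s ∈ Ioo (0 : ℝ) 1) (hα : α ∈ Ioc (0 : ℝ) 1) (ht : t ∈ Icc (-1 : ℝ) 0) (hρ : 0 < ρ)
    (hq : q ∈ closedSpherePlus n) (hp : p ∈ closedHalfBall n 1) (hpq : l1Dist p q ≤ ρ ^ 4)
    (hqρ : 2 * ρ ≤ q.2) : u t p - u t q ≤ (9 + 8 / (1 - s)) * C₀ * ρ ^ (s * α / 2) := by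
  have hC₀ := h.bound_nonneg
  have hρ₁ : ρ ≤ 1 := by linarith [snd_le_one (closedSpherePlus_subset_closedHalfBall n hq)]
  have hs₁ : 0 < 1 - s := sub_pos.2 hs.2
  have hheight : q.2 / 2 ≤ p.2 := by
    have hsnd : |p.2 - q.2| ≤ ρ ^ 4 := (le_add_of_nonneg_left (norm_nonneg _)).trans hpq
    linarith [neg_le_of_abs_le hsnd, pow_le_of_le_one hρ.le hρ₁ four_ne_zero]
  have hΨ : sphereBarrier s q p ≤ (1 + 1 / (1 - s)) * ρ ^ 4 :=
    (sphereBarrier_le hs.2 hq p).trans (by gcongr; exact (tangentGap_le_l1Dist hq p).trans hpq)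
  have hmodulus := pow_four_rpow_le_rpow_scale hs hα hρ hρ₁
  have hsq := sq_le_rpow_scale hs hα hρ hρ₁
  calc u t p - u t q ≤ C₀ * ((ρ ^ 4) ^ (α / 2) * (1 + 4 * sphereBarrier s q p / ρ ^ 4) +
        16 / q.2 ^ 2 * sphereBarrier s q p) :=
        h.sub_sphere_le hs hα ht hq (by linarith) (by positivity) hp hheight
    _ ≤ C₀ * (ρ ^ (s * α / 2) * (1 + 4 * ((1 + 1 / (1 - s)) * ρ ^ 4) / ρ ^ 4) +
        16 / (2 * ρ) ^ 2 * ((1 + 1 / (1 - s)) * ρ ^ 4)) := by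
        have hΨ₀ := (tangentGap_nonneg hq hp).trans (tangentGap_le_sphereBarrier hs.2 hp)
        gcongr
    _ = C₀ * (ρ ^ (s * α / 2) * (1 + 4 * (1 + 1 / (1 - s))) +
        4 * (1 + 1 / (1 - s)) * ρ ^ 2) := by field_simp; ring
    _ ≤ C₀ * (ρ ^ (s * α / 2) * (1 + 4 * (1 + 1 / (1 - s))) +
        4 * (1 + 1 / (1 - s)) * ρ ^ (s * α / 2)) := by gcongr
    _ = (9 + 8 / (1 - s)) * C₀ * ρ ^ (s * α / 2) := by ring

lemma sub_sphere_le_of_lt_two_mul (h : IsHolderDataSolution s α C₀ u)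
    (hs : s ∈ Ioo (0 : ℝ) 1) (hα : α ∈ Ioc (0 : ℝ) 1) (ht : t ∈ Icc (-1 : ℝ) 0) (hρ : 0 < ρ)
    (hρ₂ : ρ < 1 / 2) (hq : q ∈ closedSpherePlus n) (hp : p ∈ closedHalfBall n 1)
    (hpq : l1Dist p q ≤ ρ ^ 4) (hqρ : q.2 < 2 * ρ) :
    u t p - u t q ≤ (26 + 21 / (2 * s)) * C₀ * ρ ^ (s * α / 2) := by
  have hC₀ := h.bound_nonneg
  have hρ₁ : ρ ≤ 1 := by linarith
  have hq₁ := norm_fst_le_one (closedSpherePlus_subset_closedHalfBall n hq)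
  have hq_ne : q.1 ≠ 0 := fun h₀ => by
    have hnorm := hq.1
    rw [h₀, norm_zero] at hnorm
    nlinarith [hq.2]
  obtain ⟨z, hz, hqz⟩ := exists_unit_vector_dist_eq hq_ne hq₁
  have hqz₄ : l1Dist q (z, 0) ≤ 4 * ρ := by
    have hflat : ‖q.1 - z‖ ≤ q.2 := by
      rw [hqz]
      nlinarith [hq.1, hq.2, norm_nonneg q.1]
    rw [l1Dist, sub_zero, abs_of_nonneg hq.2]
    linarith
  have hpz : l1Dist p (z, 0) ≤ 5 * ρ := by
    linarith [l1Dist_triangle p q (z, 0), pow_le_of_le_one hρ.le hρ₁ four_ne_zero]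
  have hsphere : u t (z, 0) - u t q ≤ 4 * C₀ * ρ ^ (s * α / 2) :=
    calc u t (z, 0) - u t q ≤ C₀ * l1Dist q (z, 0) ^ α := by
          rw [l1Dist_comm]
          exact le_of_abs_le (h.sphere t ht _ (base_mem_closedSpherePlus hz) q hq)
      _ ≤ C₀ * (4 * ρ ^ α) := by
          gcongr
          exact (Real.rpow_le_rpow (l1Dist_nonneg _ _) hqz₄ hα.1.le).trans
            (mul_rpow_le_mul (by norm_num) hρ.le hα.2)
      _ ≤ C₀ * (4 * ρ ^ (s * α / 2)) := by
          gcongr C₀ * (4 * ?_)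
          exact Real.rpow_le_rpow_of_exponent_ge hρ hρ₁ (by nlinarith [hs.2, hα.1])
      _ = 4 * C₀ * ρ ^ (s * α / 2) := by ring
  have hedge := h.sub_edge_le_of_scale hs hα ht hρ hρ₁ hz hp hpz
  linear_combination hsphere + hedge

lemma sub_sphere_le_of_scale (h : IsHolderDataSolution s α C₀ u) (hs : s ∈ Ioo (0 : ℝ) 1)
    (hα : α ∈ Ioc (0 : ℝ) 1) (ht : t ∈ Icc (-1 : ℝ) 0) (hρ : 0 < ρ)
    (hq : q ∈ closedSpherePlus n) (hp : p ∈ closedHalfBall n 1) (hpq : l1Dist p q ≤ ρ ^ 4) :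
    u t p - u t q ≤ boundaryHolderConst n s * C₀ * ρ ^ (s * α / 2) := by
  have hC₀ := h.bound_nonneg
  obtain ⟨hnear, hfar, -⟩ := boundaryHolderConst_ge n hs
  rcases le_or_gt (2 * ρ) q.2 with hqρ | hqρ
  · exact (h.sub_sphere_le_of_two_mul_le hs hα ht hρ hq hp hpq hqρ).trans (by gcongr)
  rcases lt_or_ge ρ (1 / 2) with hρ₂ | hρ₂
  · exact (h.sub_sphere_le_of_lt_two_mul hs hα ht hρ hρ₂ hq hp hpq hqρ).trans (by gcongr)
  · have hβ := scale_exponent_mem hs hα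
    have hhalf : 1 / 2 ≤ ρ ^ (s * α / 2) :=
      calc (1 / 2 : ℝ) ≤ (1 / 2) ^ (s * α / 2) :=
            Real.self_le_rpow_of_le_one (by norm_num) (by norm_num) (by linarith [hβ.2])
        _ ≤ ρ ^ (s * α / 2) := Real.rpow_le_rpow (by norm_num) hρ₂ hβ.1.le
    have hM : 4 ≤ boundaryHolderConst n s := by
      linarith [div_nonneg (by norm_num : (0 : ℝ) ≤ 21) (mul_pos two_pos hs.1).le]
    calc u t p - u t q ≤ 4 * C₀ * (1 / 2) := by
          linarith [h.sub_le_two_mul ht ht hp (closedSpherePlus_subset_closedHalfBall n hq)]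
      _ ≤ boundaryHolderConst n s * C₀ * ρ ^ (s * α / 2) := by
          gcongr

lemma sub_initial_le_of_le_dist (h : IsHolderDataSolution s α C₀ u) (hs : s ∈ Ioo (0 : ℝ) 1)
    (hα : α ∈ Ioc (0 : ℝ) 1) (hT : T ∈ Icc (-1 : ℝ) 0) (hρ : 0 < ρ) (hρT : ρ ^ 4 = T + 1)
    (hx : ρ ≤ 1 - ‖x‖) :
    u T (x, 0) - u (-1) (x, 0) ≤ (7 + 3 * n / (1 - s)) * C₀ * ρ ^ (s * α / 2) := by
  have hC₀ := h.bound_nonneg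
  have hρ₁ : ρ ≤ 1 := by linarith [norm_nonneg x]
  have hK := harmonicCoeff_nonneg n hs.2
  have hxK := base_mem_closedHalfBall (x := x) (by linarith)
  have hw : initialBarrier s x T (x, 0) ≤ 2 * (harmonicCoeff n s + 1) * ρ ^ 4 :=
    hρT ▸ initialBarrier_self_le hs x hT.1
  have hw₀ : 0 ≤ initialBarrier s x T (x, 0) := by
    simpa using sq_add_sq_le_initialBarrier hs x hT.1 hxK
  have hmodulus := pow_four_rpow_le_rpow_scale hs hα hρ hρ₁
  have hsq := sq_le_rpow_scale hs hα hρ hρ₁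
  calc u T (x, 0) - u (-1) (x, 0)
      ≤ C₀ * ((ρ ^ 4) ^ (α / 2) * (1 + initialBarrier s x T (x, 0) / ρ ^ 4) +
          2 / (1 - ‖x‖) ^ 2 * initialBarrier s x T (x, 0)) :=
        h.sub_initial_le hs hα hT (by linarith) (by positivity)
    _ ≤ C₀ * (ρ ^ (s * α / 2) * (1 + 2 * (harmonicCoeff n s + 1) * ρ ^ 4 / ρ ^ 4) +
          2 / ρ ^ 2 * (2 * (harmonicCoeff n s + 1) * ρ ^ 4)) := by gcongr
    _ = C₀ * (ρ ^ (s * α / 2) * (1 + 2 * (harmonicCoeff n s + 1)) +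
          4 * (harmonicCoeff n s + 1) * ρ ^ 2) := by field_simp; ring
    _ ≤ C₀ * (ρ ^ (s * α / 2) * (1 + 2 * (harmonicCoeff n s + 1)) +
          4 * (harmonicCoeff n s + 1) * ρ ^ (s * α / 2)) := by gcongr
    _ = (7 + 3 * n / (1 - s)) * C₀ * ρ ^ (s * α / 2) := by
        have hs₁ : 1 - s ≠ 0 := (sub_pos.2 hs.2).ne'
        rw [harmonicCoeff, ← mul_one_sub]
        field_simp
        ring

lemma sub_initial_le_of_dist_lt (h : IsHolderDataSolution s α C₀ u) (hs : s ∈ Ioo (0 : ℝ) 1)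
    (hα : α ∈ Ioc (0 : ℝ) 1) (hT : T ∈ Icc (-1 : ℝ) 0) (hρ : 0 < ρ) (hρT : ρ ^ 4 = T + 1)
    (hx₁ : ‖x‖ ≤ 1) (hx : 1 - ‖x‖ < ρ) :
    u T (x, 0) - u (-1) (x, 0) ≤ (26 + 21 / (2 * s)) * C₀ * ρ ^ (s * α / 2) := by
  have hC₀ := h.bound_nonneg
  have hρ₁ : ρ ≤ 1 := (pow_le_one_iff_of_nonneg hρ.le four_ne_zero).1 (by linarith [hT.2])
  obtain ⟨z, hz, hxz⟩ := exists_unit_vector_dist_eq (norm_pos_iff.1 (by linarith)) hx₁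
  have hxzρ : l1Dist (x, 0) (z, 0) ≤ ρ := by rw [l1Dist_base, hxz]; exact hx.le
  have hpow : ρ ^ α ≤ ρ ^ (s * α / 2) :=
    Real.rpow_le_rpow_of_exponent_ge hρ hρ₁ (by nlinarith [hs.2, hα.1])
  have hedge := h.sub_edge_le_of_scale hs hα hT hρ hρ₁ hz (base_mem_closedHalfBall hx₁)
    (c := 1) (by rwa [one_mul])
  have htime : u T (z, 0) - u (-1) (z, 0) ≤ C₀ * ρ ^ (s * α / 2) := by
    refine (le_of_abs_le (h.edge T hT (-1) (left_mem_Icc.2 (by norm_num)) z hz)).trans ?_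
    rw [sub_neg_eq_add, ← hρT, abs_of_nonneg (by positivity)]
    gcongr
    exact (Real.rpow_le_rpow (by positivity) (pow_le_of_le_one hρ.le hρ₁ four_ne_zero)
      hα.1.le).trans hpow
  have hinit : u (-1) (z, 0) - u (-1) (x, 0) ≤ C₀ * ρ ^ (s * α / 2) := by
    refine (le_of_abs_le (h.initial _ (base_mem_closedHalfBall hz.le) _
      (base_mem_closedHalfBall hx₁))).trans ?_
    rw [l1Dist_comm]
    gcongr
    exact (Real.rpow_le_rpow (l1Dist_nonneg _ _) hxzρ hα.1.le).trans hpow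
  have hs₀ := hs.1
  calc u T (x, 0) - u (-1) (x, 0)
      ≤ (8 + 5 / (2 * s)) * C₀ * ρ ^ (s * α / 2) := by
        linear_combination hedge + htime + hinit
    _ ≤ (26 + 21 / (2 * s)) * C₀ * ρ ^ (s * α / 2) := by gcongr <;> norm_num

lemma sub_initial_le_of_scale (h : IsHolderDataSolution s α C₀ u) (hs : s ∈ Ioo (0 : ℝ) 1)
    (hα : α ∈ Ioc (0 : ℝ) 1) (hT : T ∈ Icc (-1 : ℝ) 0) (hρ : 0 < ρ) (hρT : ρ ^ 4 = T + 1)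
    (hx₁ : ‖x‖ ≤ 1) :
    u T (x, 0) - u (-1) (x, 0) ≤ boundaryHolderConst n s * C₀ * ρ ^ (s * α / 2) := by
  have hC₀ := h.bound_nonneg
  obtain ⟨hnear, -, hfar⟩ := boundaryHolderConst_ge n hs
  rcases le_or_gt ρ (1 - ‖x‖) with hx | hx
  · exact (h.sub_initial_le_of_le_dist hs hα hT hρ hρT hx).trans (by gcongr)
  · exact (h.sub_initial_le_of_dist_lt hs hα hT hρ hρT hx₁ hx).trans (by gcongr)

theorem abs_sub_sphere_le (h : IsHolderDataSolution s α C₀ u) (hs : s ∈ Ioo (0 : ℝ) 1)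
    (hα : α ∈ Ioc (0 : ℝ) 1) (ht : t ∈ Icc (-1 : ℝ) 0) (hp : p ∈ closedHalfBall n 1)
    (hq : q ∈ closedSpherePlus n) :
    |u t p - u t q| ≤ boundaryHolderConst n s * C₀ * l1Dist p q ^ (s * α / 8) := by
  have hβ := (scale_exponent_mem hs hα).1
  rcases (l1Dist_nonneg p q).eq_or_lt with hzero | hpos
  · rw [eq_of_l1Dist_eq_zero hzero.symm, l1Dist_self, Real.zero_rpow (by linarith)]
    simp
  obtain ⟨ρ, hρ, hρD, hρβ⟩ := exists_scale (s * α) hpos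
  have hle := h.sub_sphere_le_of_scale hs hα ht hρ hq hp hρD.ge
  have hge := h.neg.sub_sphere_le_of_scale hs hα ht hρ hq hp hρD.ge
  rw [hρβ] at hle hge
  exact abs_sub_le_iff.2 ⟨hle, by simpa [neg_add_eq_sub] using hge⟩

theorem abs_sub_initial_le (h : IsHolderDataSolution s α C₀ u) (hs : s ∈ Ioo (0 : ℝ) 1)
    (hα : α ∈ Ioc (0 : ℝ) 1) (ht : t ∈ Icc (-1 : ℝ) 0) (hx : ‖x‖ ≤ 1) :
    |u t (x, 0) - u (-1) (x, 0)| ≤ boundaryHolderConst n s * C₀ * (t + 1) ^ (s * α / 8) := by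
  have hβ := (scale_exponent_mem hs hα).1
  rcases ht.1.eq_or_lt with rfl | hlt
  · rw [neg_add_cancel, Real.zero_rpow (by linarith)]
    simp
  obtain ⟨ρ, hρ, hρT, hρβ⟩ := exists_scale (s * α) (by linarith : 0 < t + 1)
  have hle := h.sub_initial_le_of_scale hs hα ht hρ hρT hx
  have hge := h.neg.sub_initial_le_of_scale hs hα ht hρ hρT hx
  rw [hρβ] at hle hge
  exact abs_sub_le_iff.2 ⟨hle, by simpa [neg_add_eq_sub] using hge⟩

theorem abs_sub_base_le (h : IsHolderDataSolution s α C₀ u) (hs : s ∈ Ioo (0 : ℝ) 1)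
    (hα : α ∈ Ioc (0 : ℝ) 1) (ht : t ∈ Icc (-1 : ℝ) 0) (hx : ‖x‖ ≤ 1)
    (hx' : (t' = -1 ∧ ‖x'‖ ≤ 1) ∨ (t' ∈ Icc (-1 : ℝ) 0 ∧ ‖x'‖ = 1)) :
    |u t (x, 0) - u t' (x', 0)| ≤
      (boundaryHolderConst n s + 2) * C₀ * (‖x - x'‖ + |t - t'|) ^ (s * α / 8) := by
  have hC₀ := h.bound_nonneg
  have hM : 0 ≤ boundaryHolderConst n s := boundaryHolderConst_nonneg n hs
  have hγ := (scale_exponent_mem hs hα).1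
  have hγ₀ : 0 ≤ s * α / 8 := by linarith
  have hγα : s * α / 8 ≤ α := by nlinarith [hs.2, hα.1]
  set D := ‖x - x'‖ + |t - t'|
  have hxD : ‖x - x'‖ ≤ D := le_add_of_nonneg_right (abs_nonneg _)
  have htD : |t - t'| ≤ D := le_add_of_nonneg_left (norm_nonneg _)
  have hxK := base_mem_closedHalfBall hx
  suffices ∃ v, |u t (x, 0) - v| ≤ boundaryHolderConst n s * C₀ * D ^ (s * α / 8) ∧
      |v - u t' (x', 0)| ≤ C₀ * (2 * D ^ (s * α / 8)) by
    obtain ⟨v, hv, hv'⟩ := this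
    linarith [abs_sub_le (u t (x, 0)) v (u t' (x', 0))]
  rcases hx' with ⟨rfl, hx'₁⟩ | ⟨ht', hx'₁⟩
  · refine ⟨u (-1) (x, 0), (h.abs_sub_initial_le hs hα ht hx).trans ?_,
      (h.initial _ hxK _ (base_mem_closedHalfBall hx'₁)).trans ?_⟩
    · have htime : t + 1 ≤ D := by linarith [le_abs_self (t - -1)]
      have ht₁ : 0 ≤ t + 1 := by linarith [ht.1]
      gcongr
    · rw [l1Dist_base]
      gcongr
      exact rpow_le_two_mul_rpow hγ₀ hγα hα.2 (norm_nonneg _)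
        ((norm_sub_le _ _).trans (by linarith)) hxD
  · refine ⟨u t (x', 0),
      (h.abs_sub_sphere_le hs hα ht hxK (base_mem_closedSpherePlus hx'₁)).trans ?_,
      (h.edge t ht t' ht' x' hx'₁).trans ?_⟩
    · rw [l1Dist_base]
      gcongr
    · gcongr
      exact rpow_le_two_mul_rpow hγ₀ hγα hα.2 (abs_nonneg _)
        (abs_sub_le_iff.2 ⟨by linarith [ht.2, ht'.1], by linarith [ht.1, ht'.2]⟩) htD

end IsHolderDataSolution

end HolderEstimates

theorem parabolic_boundary_continuity_general (n : ℕ) {s : ℝ} (hs : s ∈ Ioo (0 : ℝ) 1) {α : ℝ}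
    (hα : α ∈ Ioc (0 : ℝ) 1) :
    ∃ C > 0, ∃ αt ∈ Ioo (0 : ℝ) 1, ∀ (u : ℝ → En n × ℝ → ℝ) (C₀ : ℝ),
      IsHolderDataSolution s α C₀ u → ∀ t ∈ Icc (-1 : ℝ) 0, ∀ p ∈ closedHalfBall n 1,
        (∀ q ∈ closedSpherePlus n,
          |u t p - u t q| ≤ C * C₀ * (‖p.1 - q.1‖ + |p.2 - q.2|) ^ αt) ∧
        (p.2 = 0 → ∀ (t' : ℝ) (x' : En n),
          ((t' = -1 ∧ ‖x'‖ ≤ 1) ∨ (t' ∈ Icc (-1 : ℝ) 0 ∧ ‖x'‖ = 1)) →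
          |u t p - u t' (x', 0)| ≤ C * C₀ * (‖p.1 - x'‖ + |t - t'|) ^ αt) := by
  have hM := boundaryHolderConst_nonneg n hs
  have hβ := scale_exponent_mem hs hα
  refine ⟨boundaryHolderConst n s + 2, by linarith, s * α / 8,
    ⟨by linarith [hβ.1], by linarith [hβ.2]⟩, fun u C₀ h t ht p hp => ⟨fun q hq => ?_, ?_⟩⟩
  · have hC₀ := h.bound_nonneg
    have hD := Real.rpow_nonneg (l1Dist_nonneg p q) (s * α / 8)
    refine (h.abs_sub_sphere_le hs hα ht hp hq).trans ?_
    rw [← l1Dist]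
    gcongr
    linarith
  · obtain ⟨x, y⟩ := p
    rintro rfl t' x' hx'
    have hx := norm_fst_le_one hp
    exact h.abs_sub_base_le hs hα ht hx hx'

/-- **Lemma 4.6 (main boundary estimate).** If a bounded solution of the localized
fractional heat equation has `C^α` data on the parabolic boundary, then `u` separates with
a Hölder modulus `α̃` from its value at the closest boundary point: the closest point of
`{t} × (∂B_1)^+` when `y > 0`, and the closest point of
`({-1} × B_1^0) ∪ ([-1,0] × ∂B_1^0)` when `y = 0`. -/
theorem parabolic_boundary_continuity (n : ℕ) (hn : 1 ≤ n) (s : ℝ)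
    (hs : s ∈ Ioo (0 : ℝ) (1/2)) (α : ℝ) (hα : α ∈ Ioc (0 : ℝ) 1) :
    ∃ C > 0, ∃ αt ∈ Ioo (0 : ℝ) 1, ∀ (u : ℝ → En n × ℝ → ℝ) (C₀ : ℝ),
      IsFracHeatSolution (1 - 2*s) u →
      0 ≤ C₀ →
      (∀ t ∈ Icc (-1 : ℝ) 0, ∀ p ∈ halfBall n 1, |u t p| ≤ C₀) →
      (∀ p ∈ closedHalfBall n 1, ∀ q ∈ closedHalfBall n 1,
        |u (-1) p| ≤ C₀ ∧
        |u (-1) p - u (-1) q| ≤ C₀ * (‖p.1 - q.1‖ + |p.2 - q.2|) ^ α) →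
      (∀ t ∈ Icc (-1 : ℝ) 0, ∀ t' ∈ Icc (-1 : ℝ) 0, ∀ x x' : En n, ‖x‖ = 1 → ‖x'‖ = 1 →
        |u t (x, 0)| ≤ C₀ ∧
        |u t (x, 0) - u t' (x', 0)| ≤ C₀ * (|t - t'| + ‖x - x'‖) ^ α) →
      (∀ t ∈ Icc (-1 : ℝ) 0, ∀ p ∈ closedSpherePlus n, ∀ q ∈ closedSpherePlus n,
        |u t p| ≤ C₀ ∧
        |u t p - u t q| ≤ C₀ * (‖p.1 - q.1‖ + |p.2 - q.2|) ^ α) →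
      ∀ t ∈ Icc (-1 : ℝ) 0, ∀ p ∈ closedHalfBall n 1,
        (0 < p.2 →
          ∀ q ∈ closedSpherePlus n,
            (∀ q' ∈ closedSpherePlus n,
              ‖p.1 - q.1‖^2 + (p.2 - q.2)^2 ≤ ‖p.1 - q'.1‖^2 + (p.2 - q'.2)^2) →
            |u t p - u t q| ≤ C * C₀ * (‖p.1 - q.1‖ + |p.2 - q.2|) ^ αt) ∧
        (p.2 = 0 →
          ∀ (t' : ℝ) (x' : En n),
            ((t' = -1 ∧ ‖x'‖ ≤ 1) ∨ (t' ∈ Icc (-1 : ℝ) 0 ∧ ‖x'‖ = 1)) →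
            (∀ (t'' : ℝ) (x'' : En n),
              ((t'' = -1 ∧ ‖x''‖ ≤ 1) ∨ (t'' ∈ Icc (-1 : ℝ) 0 ∧ ‖x''‖ = 1)) →
              (t - t')^2 + ‖p.1 - x'‖^2 ≤ (t - t'')^2 + ‖p.1 - x''‖^2) →
            |u t p - u t' (x', 0)| ≤ C * C₀ * (‖p.1 - x'‖ + |t - t'|) ^ αt) := by
  obtain ⟨C, hC, αt, hαt, hgeneral⟩ :=
    parabolic_boundary_continuity_general n ⟨hs.1, by linarith [hs.2]⟩ hα
  refine ⟨C, hC, αt, hαt, fun u C₀ hsol _ hbound hinitial hedge hsphere t ht p hp => ?_⟩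
  have hu : IsHolderDataSolution s α C₀ u :=
    { isSolution := hsol
      abs_le_interior := hbound
      initial := fun p hp q hq => (hinitial p hp q hq).2
      edge := fun t ht t' ht' x hx => by simpa using (hedge t ht t' ht' x x hx hx).2
      sphere := fun t ht p hp q hq => (hsphere t ht p hp q hq).2 }
  obtain ⟨hupper, hbase⟩ := hgeneral u C₀ hu t ht p hp
  exact ⟨fun _ q hq _ => hupper q hq, fun hy t' x' hx' _ => hbase hy t' x' hx'⟩

end
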